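/- arXiv:2603.02534 — 8 statements merged into one kernel-verified Lean document; each statement's English description precedes it below -/
import Mathlib

section
/- Let n ≥ 1, let γ > 0, let t₀ < T be real numbers, and let φ : ℝ → ℝⁿ be continuous with |φ(s)| ≤ φ_M for all s ∈ [t₀,T], where φ_M ≥ 0. Assume φ is exciting on [t₀,T] with level η > 0. Then every solution x : [t₀,T] → ℝⁿ of the gradient-flow error dynamics x'(t) = −γ⟨φ(t), x(t)⟩φ(t) satisfies |x(T)|² ≤ (1 − 2ηγ/(1 + φ_M²γ(T − t₀))²)·|x(t₀)|². -/
open scoped RealInnerProductSpace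

/-!
Along a solution, the energy `‖x‖²` drops by exactly `2γI`, where `I = ∫ ⟪φ, x⟫²` is the energy of
the output, so excitation has to be turned into a lower bound for `I`. What excitation controls is
`⟪φ, x t₀⟫`, the output with the state held at its initial value. Since `x' = -γ ⟪φ, x⟫ φ` is driven
by the output itself, Cauchy-Schwarz bounds the drift: `⟪φ, x t₀ - x⟫` has `L²` norm at most `c √I`
with `c = φM² γ (T - t₀)`. Minkowski's inequality then gives
`η ‖x t₀‖² ≤ ∫ ⟪φ, x t₀⟫² ≤ (1 + c)² I`.
-/

section SquareIntegrable

open MeasureTheory Set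

variable {α : Type*} {mα : MeasurableSpace α} {μ : Measure α} {f g : α → ℝ}

theorem inner_toLp_eq_integral_mul (hf : MemLp f 2 μ) (hg : MemLp g 2 μ) :
    ⟪hf.toLp f, hg.toLp g⟫ = ∫ t, f t * g t ∂μ := by
  rw [L2.inner_def]
  refine integral_congr_ae ?_
  filter_upwards [hf.coeFn_toLp, hg.coeFn_toLp] with t hft hgt
  rw [hft, hgt, RCLike.inner_apply, conj_trivial, mul_comm]

theorem norm_toLp_sq_eq_integral_sq (hf : MemLp f 2 μ) : ‖hf.toLp f‖ ^ 2 = ∫ t, f t ^ 2 ∂μ := by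
  simp_rw [← real_inner_self_eq_norm_sq, inner_toLp_eq_integral_mul, ← sq]

theorem sq_integral_mul_le (hf : MemLp f 2 μ) (hg : MemLp g 2 μ) :
    (∫ t, f t * g t ∂μ) ^ 2 ≤ (∫ t, f t ^ 2 ∂μ) * ∫ t, g t ^ 2 ∂μ := by
  have h := real_inner_mul_inner_self_le (hf.toLp f) (hg.toLp g)
  rwa [← sq, real_inner_self_eq_norm_sq, real_inner_self_eq_norm_sq,
    inner_toLp_eq_integral_mul, norm_toLp_sq_eq_integral_sq, norm_toLp_sq_eq_integral_sq] at h

theorem integral_sq_le_of_integral_sub_sq_le (hf : MemLp f 2 μ) (hg : MemLp g 2 μ) {c : ℝ}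
    (hc : 0 ≤ c) (h : ∫ t, (g t - f t) ^ 2 ∂μ ≤ c ^ 2 * ∫ t, f t ^ 2 ∂μ) :
    ∫ t, g t ^ 2 ∂μ ≤ (1 + c) ^ 2 * ∫ t, f t ^ 2 ∂μ := by
  have hdist : ‖hg.toLp g - hf.toLp f‖ ≤ c * ‖hf.toLp f‖ := by
    refine le_of_sq_le_sq ?_ (by positivity)
    rw [← MemLp.toLp_sub, mul_pow, norm_toLp_sq_eq_integral_sq, norm_toLp_sq_eq_integral_sq]
    exact h
  have hnorm : ‖hg.toLp g‖ ≤ (1 + c) * ‖hf.toLp f‖ := by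
    linarith [norm_le_norm_add_norm_sub' (hg.toLp g) (hf.toLp f)]
  rw [← norm_toLp_sq_eq_integral_sq hf, ← norm_toLp_sq_eq_integral_sq hg, ← mul_pow]
  gcongr

theorem memLp_restrict_Ioc_of_continuousOn_Icc {F : Type*} [NormedAddCommGroup F] {ν : Measure ℝ}
    [IsLocallyFiniteMeasure ν] {a b : ℝ} {f : ℝ → F} (hf : ContinuousOn f (Icc a b))
    (p : ENNReal) : MemLp f p (ν.restrict (Ioc a b)) := by
  obtain ⟨C, hC⟩ := isCompact_Icc.exists_bound_of_continuousOn hf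
  have hmeas : AEStronglyMeasurable f (ν.restrict (Ioc a b)) :=
    (hf.mono Ioc_subset_Icc_self).aestronglyMeasurable measurableSet_Ioc
  have : IsFiniteMeasure (ν.restrict (Ioc a b)) := isFiniteMeasure_restrict.2 measure_Ioc_lt_top.ne
  exact .of_bound hmeas C <| ae_restrict_of_forall_mem measurableSet_Ioc fun t ht ↦
    hC t (Ioc_subset_Icc_self ht)

end SquareIntegrable

section GradientFlow

open MeasureTheory Set

variable {E : Type*} [NormedAddCommGroup E] [InnerProductSpace ℝ E]

theorem integral_sq_inner_le {a b : ℝ} {φ : ℝ → E} (hab : a ≤ b) (hφ : ContinuousOn φ (Icc a b))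
    {M : ℝ} (hM : ∀ s ∈ Icc a b, ‖φ s‖ ≤ M) (v : E) :
    ∫ t in a..b, ⟪φ t, v⟫ ^ 2 ≤ (M * ‖v‖) ^ 2 * (b - a) := by
  have hpointwise : ∀ t ∈ Icc a b, ⟪φ t, v⟫ ^ 2 ≤ (M * ‖v‖) ^ 2 := fun t ht ↦
    sq_le_sq.2 <| ((abs_real_inner_le_norm _ _).trans (by gcongr; exact hM t ht)).trans
      (le_abs_self _)
  calc ∫ t in a..b, ⟪φ t, v⟫ ^ 2 ≤ ∫ _ in a..b, (M * ‖v‖) ^ 2 :=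
        intervalIntegral.integral_mono_on hab
          (((hφ.inner continuousOn_const).pow 2).intervalIntegrable_of_Icc hab)
          intervalIntegrable_const hpointwise
    _ = (M * ‖v‖) ^ 2 * (b - a) := by
        rw [intervalIntegral.integral_const, smul_eq_mul, mul_comm]

/-- `x` solves the gradient-flow error dynamics `x' = -γ ⟪φ, x⟫ φ` with regressor `φ` and rate `γ`
on `[a, b]`; the derivatives at the endpoints are one-sided. -/
def IsGradientFlowOn (γ : ℝ) (φ x : ℝ → E) (a b : ℝ) : Prop :=
  ∀ t ∈ Icc a b, HasDerivWithinAt x (-(γ * ⟪φ t, x t⟫) • φ t) (Icc a b) t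

namespace IsGradientFlowOn

variable {γ a b : ℝ} {φ x : ℝ → E}

theorem continuousOn (hx : IsGradientFlowOn γ φ x a b) : ContinuousOn x (Icc a b) :=
  HasDerivWithinAt.continuousOn hx

theorem mono_right (hx : IsGradientFlowOn γ φ x a b) {t : ℝ} (ht : t ≤ b) :
    IsGradientFlowOn γ φ x a t := fun s hs ↦
  (hx s ⟨hs.1, hs.2.trans ht⟩).mono (Icc_subset_Icc_right ht)

theorem hasDerivAt (hx : IsGradientFlowOn γ φ x a b) {t : ℝ} (ht : t ∈ Ioo a b) :
    HasDerivAt x (-(γ * ⟪φ t, x t⟫) • φ t) t :=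
  (hx t (Ioo_subset_Icc_self ht)).hasDerivAt (Icc_mem_nhds ht.1 ht.2)

theorem norm_sq_eq_sub_integral (hx : IsGradientFlowOn γ φ x a b) (hab : a ≤ b)
    (hφ : ContinuousOn φ (Icc a b)) :
    ‖x b‖ ^ 2 = ‖x a‖ ^ 2 - 2 * γ * ∫ t in a..b, ⟪φ t, x t⟫ ^ 2 := by
  have hderiv : ∀ t ∈ Ioo a b,
      HasDerivAt (fun t ↦ ‖x t‖ ^ 2) (-(2 * γ) * ⟪φ t, x t⟫ ^ 2) t := fun t ht ↦ by
    refine (hx.hasDerivAt ht).norm_sq.congr_deriv ?_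
    rw [real_inner_smul_right, real_inner_comm]
    ring
  have hcont : ContinuousOn (fun t ↦ -(2 * γ) * ⟪φ t, x t⟫ ^ 2) (Icc a b) :=
    ((hφ.inner hx.continuousOn).pow 2).const_mul _
  have hftc := intervalIntegral.integral_eq_sub_of_hasDerivAt_of_le (f := fun t ↦ ‖x t‖ ^ 2) hab
    (hx.continuousOn.norm.pow 2) hderiv (hcont.intervalIntegrable_of_Icc hab)
  rw [intervalIntegral.integral_const_mul] at hftc
  linarith

theorem inner_sub_eq_integral (hx : IsGradientFlowOn γ φ x a b) (hab : a ≤ b)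
    (hφ : ContinuousOn φ (Icc a b)) (v : E) :
    ⟪v, x a - x b⟫ = γ * ∫ t in a..b, ⟪φ t, x t⟫ * ⟪φ t, v⟫ := by
  have hderiv : ∀ t ∈ Ioo a b,
      HasDerivAt (fun t ↦ ⟪v, x t⟫) (-γ * (⟪φ t, x t⟫ * ⟪φ t, v⟫)) t := fun t ht ↦ by
    refine ((hasDerivAt_const t v).inner ℝ (hx.hasDerivAt ht)).congr_deriv ?_
    rw [real_inner_smul_right, real_inner_comm (φ t) v, inner_zero_left]
    ring
  have hcont : ContinuousOn (fun t ↦ -γ * (⟪φ t, x t⟫ * ⟪φ t, v⟫)) (Icc a b) :=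
    ((hφ.inner hx.continuousOn).mul (hφ.inner continuousOn_const)).const_mul _
  have hftc := intervalIntegral.integral_eq_sub_of_hasDerivAt_of_le hab
    (continuousOn_const.inner hx.continuousOn) hderiv (hcont.intervalIntegrable_of_Icc hab)
  rw [intervalIntegral.integral_const_mul] at hftc
  rw [inner_sub_right]
  linarith

theorem sq_inner_sub_le (hx : IsGradientFlowOn γ φ x a b) (hφ : ContinuousOn φ (Icc a b))
    (v : E) {s : ℝ} (hs : s ∈ Icc a b) :
    ⟪v, x a - x s⟫ ^ 2 ≤
      γ ^ 2 * ((∫ t in a..b, ⟪φ t, x t⟫ ^ 2) * ∫ t in a..b, ⟪φ t, v⟫ ^ 2) := by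
  have houtput : ContinuousOn (fun t ↦ ⟪φ t, x t⟫) (Icc a b) := hφ.inner hx.continuousOn
  have hv : ContinuousOn (fun t ↦ ⟪φ t, v⟫) (Icc a b) := hφ.inner continuousOn_const
  have hsub : Icc a s ⊆ Icc a b := Icc_subset_Icc_right hs.2
  have hcauchy : (∫ t in a..s, ⟪φ t, x t⟫ * ⟪φ t, v⟫) ^ 2 ≤
      (∫ t in a..s, ⟪φ t, x t⟫ ^ 2) * ∫ t in a..s, ⟪φ t, v⟫ ^ 2 := by
    simp only [intervalIntegral.integral_of_le hs.1]
    exact sq_integral_mul_le (memLp_restrict_Ioc_of_continuousOn_Icc (houtput.mono hsub) 2)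
      (memLp_restrict_Ioc_of_continuousOn_Icc (hv.mono hsub) 2)
  have hmono {f : ℝ → ℝ} (hf : ContinuousOn f (Icc a b)) :
      ∫ t in a..s, f t ^ 2 ≤ ∫ t in a..b, f t ^ 2 :=
    intervalIntegral.integral_mono_interval le_rfl hs.1 hs.2 (.of_forall fun t ↦ sq_nonneg _)
      ((hf.pow 2).intervalIntegrable_of_Icc (hs.1.trans hs.2))
  rw [(hx.mono_right hs.2).inner_sub_eq_integral hs.1 (hφ.mono hsub), mul_pow]
  gcongr
  refine hcauchy.trans (mul_le_mul (hmono houtput) (hmono hv) ?_ ?_)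
  exacts [intervalIntegral.integral_nonneg hs.1 fun t _ ↦ sq_nonneg _,
    intervalIntegral.integral_nonneg (hs.1.trans hs.2) fun t _ ↦ sq_nonneg _]

theorem sq_inner_sub_le_of_norm_le (hx : IsGradientFlowOn γ φ x a b) (hφ : ContinuousOn φ (Icc a b))
    {M : ℝ} (hM : ∀ s ∈ Icc a b, ‖φ s‖ ≤ M) {s : ℝ} (hs : s ∈ Icc a b) :
    ⟪φ s, x a - x s⟫ ^ 2 ≤ γ ^ 2 * ((∫ t in a..b, ⟪φ t, x t⟫ ^ 2) * (M ^ 4 * (b - a))) := by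
  have hab : a ≤ b := hs.1.trans hs.2
  have houtput_nonneg : 0 ≤ ∫ t in a..b, ⟪φ t, x t⟫ ^ 2 :=
    intervalIntegral.integral_nonneg hab fun t _ ↦ sq_nonneg _
  have hregressor : ∫ t in a..b, ⟪φ t, φ s⟫ ^ 2 ≤ M ^ 4 * (b - a) :=
    calc ∫ t in a..b, ⟪φ t, φ s⟫ ^ 2 ≤ (M * ‖φ s‖) ^ 2 * (b - a) :=
          integral_sq_inner_le hab hφ hM (φ s)
      _ ≤ (M * M) ^ 2 * (b - a) := by
          have hM_nonneg : 0 ≤ M := (norm_nonneg _).trans (hM s hs)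
          refine mul_le_mul_of_nonneg_right ?_ (sub_nonneg.2 hab)
          gcongr
          exact hM s hs
      _ = M ^ 4 * (b - a) := by ring
  refine (hx.sq_inner_sub_le hφ (φ s) hs).trans ?_
  gcongr

theorem integral_sq_inner_initial_le (hx : IsGradientFlowOn γ φ x a b) (hγ : 0 ≤ γ) (hab : a ≤ b)
    (hφ : ContinuousOn φ (Icc a b)) {M : ℝ} (hM : ∀ s ∈ Icc a b, ‖φ s‖ ≤ M) :
    ∫ t in a..b, ⟪φ t, x a⟫ ^ 2 ≤
      (1 + M ^ 2 * γ * (b - a)) ^ 2 * ∫ t in a..b, ⟪φ t, x t⟫ ^ 2 := by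
  have houtput : ContinuousOn (fun t ↦ ⟪φ t, x t⟫) (Icc a b) := hφ.inner hx.continuousOn
  have hinitial : ContinuousOn (fun t ↦ ⟪φ t, x a⟫) (Icc a b) := hφ.inner continuousOn_const
  have hdrift : ∫ s in a..b, (⟪φ s, x a⟫ - ⟪φ s, x s⟫) ^ 2 ≤
      (M ^ 2 * γ * (b - a)) ^ 2 * ∫ t in a..b, ⟪φ t, x t⟫ ^ 2 :=
    calc ∫ s in a..b, (⟪φ s, x a⟫ - ⟪φ s, x s⟫) ^ 2
        ≤ ∫ _ in a..b, γ ^ 2 * ((∫ t in a..b, ⟪φ t, x t⟫ ^ 2) * (M ^ 4 * (b - a))) := by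
          refine intervalIntegral.integral_mono_on hab
            (((hinitial.sub houtput).pow 2).intervalIntegrable_of_Icc hab)
            intervalIntegrable_const fun s hs ↦ ?_
          rw [← inner_sub_right]
          exact hx.sq_inner_sub_le_of_norm_le hφ hM hs
      _ = (M ^ 2 * γ * (b - a)) ^ 2 * ∫ t in a..b, ⟪φ t, x t⟫ ^ 2 := by
          rw [intervalIntegral.integral_const, smul_eq_mul]
          ring
  have hc : 0 ≤ M ^ 2 * γ * (b - a) := mul_nonneg (by positivity) (sub_nonneg.2 hab)
  simp only [intervalIntegral.integral_of_le hab] at hdrift ⊢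
  exact integral_sq_le_of_integral_sub_sq_le (memLp_restrict_Ioc_of_continuousOn_Icc houtput 2)
    (memLp_restrict_Ioc_of_continuousOn_Icc hinitial 2) hc hdrift

end IsGradientFlowOn

theorem stmt0_general {γ a b M η : ℝ} {φ x : ℝ → E} (hγ : 0 ≤ γ) (hab : a ≤ b)
    (hφ : ContinuousOn φ (Icc a b)) (hM : ∀ s ∈ Icc a b, ‖φ s‖ ≤ M)
    (hexc : η * ‖x a‖ ^ 2 ≤ ∫ s in a..b, ⟪φ s, x a⟫ ^ 2) (hx : IsGradientFlowOn γ φ x a b) :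
    ‖x b‖ ^ 2 ≤ (1 - 2 * η * γ / (1 + M ^ 2 * γ * (b - a)) ^ 2) * ‖x a‖ ^ 2 := by
  set c := M ^ 2 * γ * (b - a)
  have hc : 0 ≤ c := mul_nonneg (by positivity) (sub_nonneg.2 hab)
  have hexcited : η * ‖x a‖ ^ 2 / (1 + c) ^ 2 ≤ ∫ t in a..b, ⟪φ t, x t⟫ ^ 2 :=
    (div_le_iff₀' (pow_pos (by linarith) 2)).2
      (hexc.trans (hx.integral_sq_inner_initial_le hγ hab hφ hM))
  calc ‖x b‖ ^ 2 = ‖x a‖ ^ 2 - 2 * γ * ∫ t in a..b, ⟪φ t, x t⟫ ^ 2 :=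
        hx.norm_sq_eq_sub_integral hab hφ
    _ ≤ ‖x a‖ ^ 2 - 2 * γ * (η * ‖x a‖ ^ 2 / (1 + c) ^ 2) := by gcongr
    _ = (1 - 2 * η * γ / (1 + c) ^ 2) * ‖x a‖ ^ 2 := by ring

end GradientFlow

/-- Energy decay bound under interval excitation for the
gradient-flow error dynamics. -/
theorem stmt0 (n : ℕ) (hn : 1 ≤ n) (γ : ℝ) (hγ : 0 < γ) (t₀ T : ℝ) (ht : t₀ < T)
    (φM : ℝ) (hφM : 0 ≤ φM) (η : ℝ) (hη : 0 < η)
    (φ : ℝ → EuclideanSpace ℝ (Fin n)) (hφc : Continuous φ)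
    (hbound : ∀ s ∈ Set.Icc t₀ T, ‖φ s‖ ≤ φM)
    (hexc : ∀ v : EuclideanSpace ℝ (Fin n), η * ‖v‖ ^ 2 ≤ ∫ s in t₀..T, ⟪φ s, v⟫ ^ 2)
    (x : ℝ → EuclideanSpace ℝ (Fin n))
    (hx : ∀ t ∈ Set.Icc t₀ T, HasDerivAt x (-(γ * ⟪φ t, x t⟫) • φ t) t) :
    ‖x T‖ ^ 2 ≤ (1 - 2 * η * γ / (1 + φM ^ 2 * γ * (T - t₀)) ^ 2) * ‖x t₀‖ ^ 2 :=
  stmt0_general hγ.le ht.le hφc.continuousOn hbound (hexc (x t₀))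
    fun t ht ↦ (hx t ht).hasDerivWithinAt
end

section
/- Let n ≥ 1, let γ > 0, let t₀ < T be real numbers, and let φ : ℝ → ℝⁿ be continuous with |φ(s)| ≤ φ_M for all s ∈ [t₀,T], where φ_M ≥ 0. Assume 1 − φ_M²γ(T − t₀) > 0. Then every solution x : [t₀,T] → ℝⁿ of the gradient-flow error dynamics x'(t) = −γ⟨φ(t), x(t)⟩φ(t) satisfies |x(t₀)|² ≤ (1 + 2γφ_M²(T − t₀)/(1 − φ_M²γ(T − t₀))²)·|x(T)|². -/
open scoped RealInnerProductSpace

/-!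
The vector field `v ↦ -γ ⟪φ, v⟫ φ` is linear of operator norm `γ ‖φ‖² ≤ γ φM²`, so Grönwall's
inequality run backwards in time gives `‖x t₀‖ ≤ ‖x T‖ exp a` with `a = φM² γ (T - t₀)`. When
`a < 1`, `exp a ≤ 1 / (1 - a)` turns the squared factor into
`exp a ^ 2 ≤ 1 / (1 - a)² ≤ (1 + a²) / (1 - a)² = 1 + 2 a / (1 - a)²`.
-/

open Set

theorem norm_le_gronwallBound_of_norm_deriv_left_le {E : Type*} [NormedAddCommGroup E]
    [NormedSpace ℝ E] {f f' : ℝ → E} {δ K ε a b : ℝ} (hf : ContinuousOn f (Icc a b))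
    (hf' : ∀ t ∈ Ioc a b, HasDerivWithinAt f (f' t) (Iic t) t) (hb : ‖f b‖ ≤ δ)
    (bound : ∀ t ∈ Ioc a b, ‖f' t‖ ≤ K * ‖f t‖ + ε) :
    ∀ t ∈ Icc a b, ‖f t‖ ≤ gronwallBound δ K ε (b - t) := by
  have mapsTo_Icc : MapsTo Neg.neg (Icc (-b) (-a)) (Icc a b) :=
    fun _ hs ↦ ⟨le_neg.mp hs.2, neg_le.mp hs.1⟩
  have mapsTo_Ioc : MapsTo Neg.neg (Ico (-b) (-a)) (Ioc a b) :=
    fun _ hs ↦ ⟨lt_neg.mp hs.2, neg_le.mp hs.1⟩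
  have reversed_deriv : ∀ s ∈ Ico (-b) (-a),
      HasDerivWithinAt (f ∘ Neg.neg) ((-1 : ℝ) • f' (-s)) (Ici s) s := fun s hs ↦
    (hf' (-s) (mapsTo_Ioc hs)).scomp s (hasDerivWithinAt_neg s (Ici s))
      fun _ hr ↦ neg_le_neg (mem_Ici.mp hr)
  have reversed_bound : ∀ s ∈ Ico (-b) (-a),
      ‖(-1 : ℝ) • f' (-s)‖ ≤ K * ‖(f ∘ Neg.neg) s‖ + ε := fun s hs ↦ by
    simpa only [Function.comp_apply, neg_smul, one_smul, norm_neg] using bound (-s) (mapsTo_Ioc hs)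
  intro t ht
  have reversed_estimate := norm_le_gronwallBound_of_norm_deriv_right_le
    (hf.comp continuousOn_neg mapsTo_Icc) reversed_deriv
    (by simpa only [Function.comp_apply, neg_neg] using hb) reversed_bound
    (-t) ⟨neg_le_neg ht.2, neg_le_neg ht.1⟩
  rwa [Function.comp_apply, neg_neg, neg_sub_neg] at reversed_estimate

theorem exp_sq_le_one_add_div_one_sub_sq {a : ℝ} (ha : a < 1) :
    Real.exp a ^ 2 ≤ 1 + 2 * a / (1 - a) ^ 2 := by
  have one_sub_pos : 0 < 1 - a := sub_pos.mpr ha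
  have exp_le : Real.exp a ≤ (1 - a)⁻¹ :=
    calc Real.exp a = (Real.exp (-a))⁻¹ := by rw [Real.exp_neg, inv_inv]
      _ ≤ (1 - a)⁻¹ := inv_anti₀ one_sub_pos (Real.one_sub_le_exp_neg a)
  calc Real.exp a ^ 2 ≤ ((1 - a)⁻¹) ^ 2 := by gcongr
    _ = 1 / (1 - a) ^ 2 := by rw [inv_pow, one_div]
    _ ≤ (1 + a ^ 2) / (1 - a) ^ 2 := by
      gcongr
      exact le_add_of_nonneg_right (sq_nonneg a)
    _ = 1 + 2 * a / (1 - a) ^ 2 := by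
      field_simp
      ring

section InnerProductSpace

variable {E : Type*} [NormedAddCommGroup E] [InnerProductSpace ℝ E]

theorem norm_real_inner_smul_self_le (v w : E) : ‖⟪v, w⟫ • v‖ ≤ ‖v‖ ^ 2 * ‖w‖ :=
  calc ‖⟪v, w⟫ • v‖ = ‖⟪v, w⟫‖ * ‖v‖ := norm_smul _ _
    _ ≤ ‖v‖ * ‖w‖ * ‖v‖ := by
      gcongr
      exact norm_inner_le_norm v w
    _ = ‖v‖ ^ 2 * ‖w‖ := by ring

variable {γ t₀ T φM : ℝ} {φ x : ℝ → E}

theorem norm_le_norm_mul_exp_of_gradientFlow (hγ : 0 ≤ γ) (ht : t₀ ≤ T)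
    (hbound : ∀ s ∈ Icc t₀ T, ‖φ s‖ ≤ φM)
    (hx : ∀ t ∈ Icc t₀ T, HasDerivWithinAt x (-(γ * ⟪φ t, x t⟫) • φ t) (Icc t₀ T) t) :
    ‖x t₀‖ ≤ ‖x T‖ * Real.exp (φM ^ 2 * γ * (T - t₀)) := by
  have norm_deriv_le : ∀ t ∈ Icc t₀ T,
      ‖-(γ * ⟪φ t, x t⟫) • φ t‖ ≤ φM ^ 2 * γ * ‖x t‖ + 0 := fun t htT ↦
    calc ‖-(γ * ⟪φ t, x t⟫) • φ t‖ = γ * ‖⟪φ t, x t⟫ • φ t‖ := by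
          rw [neg_smul, norm_neg, mul_smul, norm_smul_of_nonneg hγ]
      _ ≤ γ * (‖φ t‖ ^ 2 * ‖x t‖) := by
          gcongr
          exact norm_real_inner_smul_self_le (φ t) (x t)
      _ ≤ γ * (φM ^ 2 * ‖x t‖) := by
          gcongr
          exact hbound t htT
      _ = φM ^ 2 * γ * ‖x t‖ + 0 := by ring
  have left_deriv : ∀ t ∈ Ioc t₀ T,
      HasDerivWithinAt x (-(γ * ⟪φ t, x t⟫) • φ t) (Iic t) t := fun t htT ↦
    (hx t (Ioc_subset_Icc_self htT)).mono_of_mem_nhdsWithin (Icc_mem_nhdsLE_of_mem htT)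
  rw [← gronwallBound_ε0]
  exact norm_le_gronwallBound_of_norm_deriv_left_le
    (fun t htT ↦ (hx t htT).continuousWithinAt) left_deriv le_rfl
    (fun t htT ↦ norm_deriv_le t (Ioc_subset_Icc_self htT)) t₀ (left_mem_Icc.mpr ht)

theorem stmt1_general (hγ : 0 ≤ γ) (ht : t₀ ≤ T) (hbound : ∀ s ∈ Icc t₀ T, ‖φ s‖ ≤ φM)
    (hpos : 0 < 1 - φM ^ 2 * γ * (T - t₀))
    (hx : ∀ t ∈ Icc t₀ T, HasDerivWithinAt x (-(γ * ⟪φ t, x t⟫) • φ t) (Icc t₀ T) t) :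
    ‖x t₀‖ ^ 2 ≤
      (1 + 2 * γ * φM ^ 2 * (T - t₀) / (1 - φM ^ 2 * γ * (T - t₀)) ^ 2) * ‖x T‖ ^ 2 :=
  calc ‖x t₀‖ ^ 2 ≤ (‖x T‖ * Real.exp (φM ^ 2 * γ * (T - t₀))) ^ 2 := by
        gcongr
        exact norm_le_norm_mul_exp_of_gradientFlow hγ ht hbound hx
    _ = Real.exp (φM ^ 2 * γ * (T - t₀)) ^ 2 * ‖x T‖ ^ 2 := by ring
    _ ≤ (1 + 2 * (φM ^ 2 * γ * (T - t₀)) / (1 - φM ^ 2 * γ * (T - t₀)) ^ 2) * ‖x T‖ ^ 2 := by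
        gcongr
        exact exp_sq_le_one_add_div_one_sub_sq (sub_pos.mp hpos)
    _ = (1 + 2 * γ * φM ^ 2 * (T - t₀) / (1 - φM ^ 2 * γ * (T - t₀)) ^ 2) * ‖x T‖ ^ 2 := by
        ring

end InnerProductSpace

/-- Backward energy bound for the gradient-flow error dynamics. -/
theorem stmt1 (n : ℕ) (hn : 1 ≤ n) (γ : ℝ) (hγ : 0 < γ) (t₀ T : ℝ) (ht : t₀ < T)
    (φM : ℝ) (hφM : 0 ≤ φM)
    (φ : ℝ → EuclideanSpace ℝ (Fin n)) (hφc : Continuous φ)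
    (hbound : ∀ s ∈ Set.Icc t₀ T, ‖φ s‖ ≤ φM)
    (hpos : 0 < 1 - φM ^ 2 * γ * (T - t₀))
    (x : ℝ → EuclideanSpace ℝ (Fin n))
    (hx : ∀ t ∈ Set.Icc t₀ T, HasDerivAt x (-(γ * ⟪φ t, x t⟫) • φ t) t) :
    ‖x t₀‖ ^ 2 ≤ (1 + 2 * γ * φM ^ 2 * (T - t₀) / (1 - φM ^ 2 * γ * (T - t₀)) ^ 2) * ‖x T‖ ^ 2 :=
  stmt1_general hγ.le ht.le hbound hpos fun t htT ↦ (hx t htT).hasDerivWithinAt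
end

section
/- Let n ≥ 1, let γ > 0, let t₀ ≤ T be real numbers, let φ : ℝ → ℝⁿ be continuous with |φ(s)| ≤ φ_M for all s ∈ [t₀,T], where φ_M ≥ 0, and let w : ℝ → ℝ be continuous. Then every solution θ̃ : [t₀,T] → ℝⁿ of the perturbed gradient-flow error dynamics θ̃'(t) = −γ⟨φ(t), θ̃(t)⟩φ(t) + γ w(t) φ(t) satisfies |θ̃(t)| ≤ |θ̃(t₀)| + γ φ_M ∫_{t₀}^{t} |w(s)| ds for all t ∈ [t₀,T]. -/
open scoped RealInnerProductSpace

/-!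
The norm `‖θ‖` grows only through `⟪θ, θ'⟫`. To this the gradient term contributes
`-γ⟪φ, θ⟫² ≤ 0`, so the noise alone can make `‖θ‖` grow, at rate at most `γ‖φ‖|w|`.
Since the norm is not differentiable at `0`, this rate is integrated for the regularised norm
`√(‖θ‖² + ε²)`, uniformly in `ε > 0`.
-/

open Set MeasureTheory

section InnerProductSpace

variable {E : Type*} [NormedAddCommGroup E] [InnerProductSpace ℝ E]

section NormGrowth

theorem hasDerivWithinAt_sqrt_norm_sq_add_const {f : ℝ → E} {f' : E} {s : Set ℝ} {x c : ℝ}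
    (hf : HasDerivWithinAt f f' s x) (hne : ‖f x‖ ^ 2 + c ≠ 0) :
    HasDerivWithinAt (fun y => √(‖f y‖ ^ 2 + c)) (⟪f x, f'⟫ / √(‖f x‖ ^ 2 + c)) s x := by
  have hsqrt := (hf.norm_sq.add_const c).sqrt hne
  rwa [mul_div_mul_left _ _ two_ne_zero] at hsqrt

variable {f f' : ℝ → E} {g : ℝ → ℝ} {a b : ℝ}

theorem sqrt_norm_sq_add_const_sub_le_integral {c : ℝ} (hc : 0 < c) (hab : a ≤ b)
    (hf : ContinuousOn f (Icc a b)) (hf' : ∀ x ∈ Ioo a b, HasDerivWithinAt f (f' x) (Ioi x) x)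
    (hg : IntegrableOn g (Icc a b)) (hg₀ : ∀ x ∈ Ioo a b, 0 ≤ g x)
    (hinner : ∀ x ∈ Ioo a b, ⟪f x, f' x⟫ ≤ g x * ‖f x‖) :
    √(‖f b‖ ^ 2 + c) - √(‖f a‖ ^ 2 + c) ≤ ∫ x in a..b, g x := by
  refine intervalIntegral.sub_le_integral_of_hasDeriv_right_of_le hab (by fun_prop)
    (fun x hx => hasDerivWithinAt_sqrt_norm_sq_add_const (hf' x hx) (by positivity)) hg
    fun x hx => ?_
  have hnorm : ‖f x‖ ≤ √(‖f x‖ ^ 2 + c) := Real.le_sqrt_of_sq_le (by linarith)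
  rw [div_le_iff₀ (by positivity)]
  exact (hinner x hx).trans (mul_le_mul_of_nonneg_left hnorm (hg₀ x hx))

theorem norm_le_norm_add_integral_of_inner_deriv_right_le (hab : a ≤ b)
    (hf : ContinuousOn f (Icc a b)) (hf' : ∀ x ∈ Ioo a b, HasDerivWithinAt f (f' x) (Ioi x) x)
    (hg : IntegrableOn g (Icc a b)) (hg₀ : ∀ x ∈ Ioo a b, 0 ≤ g x)
    (hinner : ∀ x ∈ Ioo a b, ⟪f x, f' x⟫ ≤ g x * ‖f x‖) :
    ‖f b‖ ≤ ‖f a‖ + ∫ x in a..b, g x := by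
  refine le_of_forall_pos_le_add fun ε hε => ?_
  have hgrowth := sqrt_norm_sq_add_const_sub_le_integral (pow_pos hε 2) hab hf hf' hg hg₀ hinner
  have hlower : ‖f b‖ ≤ √(‖f b‖ ^ 2 + ε ^ 2) := Real.le_sqrt_of_sq_le (by linarith [sq_nonneg ε])
  have hupper : √(‖f a‖ ^ 2 + ε ^ 2) ≤ ‖f a‖ + ε :=
    Real.sqrt_le_iff.2 ⟨by positivity, by nlinarith [norm_nonneg (f a)]⟩
  linarith

end NormGrowth

theorem inner_perturbed_gradientFlow_le {γ : ℝ} (hγ : 0 ≤ γ) (c : ℝ) (p x : E) :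
    ⟪x, -(γ * ⟪p, x⟫) • p + (γ * c) • p⟫ ≤ γ * ‖p‖ * |c| * ‖x‖ :=
  calc ⟪x, -(γ * ⟪p, x⟫) • p + (γ * c) • p⟫
      = -(γ * ⟪p, x⟫ ^ 2) + γ * (c * ⟪p, x⟫) := by
        rw [inner_add_right, inner_smul_right, inner_smul_right, real_inner_comm p x]
        ring
    _ ≤ γ * (c * ⟪p, x⟫) := by linarith [mul_nonneg hγ (sq_nonneg ⟪p, x⟫)]
    _ ≤ γ * (|c| * (‖p‖ * ‖x‖)) := by
        refine mul_le_mul_of_nonneg_left ?_ hγ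
        calc c * ⟪p, x⟫ ≤ |c| * |⟪p, x⟫| := (le_abs_self _).trans_eq (abs_mul _ _)
          _ ≤ |c| * (‖p‖ * ‖x‖) := by gcongr; exact abs_real_inner_le_norm p x
    _ = γ * ‖p‖ * |c| * ‖x‖ := by ring

theorem stmt8_general {γ t₀ T φM : ℝ} (hγ : 0 ≤ γ) {φ : ℝ → E}
    (hbound : ∀ s ∈ Ioo t₀ T, ‖φ s‖ ≤ φM) {w : ℝ → ℝ} (hw : IntegrableOn w (Icc t₀ T))
    {θ : ℝ → E} (hθc : ContinuousOn θ (Icc t₀ T))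
    (hθ : ∀ t ∈ Ioo t₀ T,
      HasDerivWithinAt θ (-(γ * ⟪φ t, θ t⟫) • φ t + (γ * w t) • φ t) (Ioi t) t) :
    ∀ t ∈ Icc t₀ T, ‖θ t‖ ≤ ‖θ t₀‖ + γ * φM * ∫ s in t₀..t, |w s| := by
  intro t ht
  have hIcc : Icc t₀ t ⊆ Icc t₀ T := Icc_subset_Icc_right ht.2
  have hIoo : Ioo t₀ t ⊆ Ioo t₀ T := Ioo_subset_Ioo_right ht.2
  have hrate : ∀ s ∈ Ioo t₀ t, γ * ‖φ s‖ * |w s| ≤ γ * φM * |w s| := fun s hs => by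
    gcongr
    exact hbound s (hIoo hs)
  rw [← intervalIntegral.integral_const_mul]
  refine norm_le_norm_add_integral_of_inner_deriv_right_le ht.1 (hθc.mono hIcc)
    (fun s hs => hθ s (hIoo hs)) ((hw.mono_set hIcc).abs.const_mul _)
    (fun s hs => le_trans (by positivity) (hrate s hs)) fun s hs => ?_
  exact (inner_perturbed_gradientFlow_le hγ (w s) (φ s) (θ s)).trans
    (mul_le_mul_of_nonneg_right (hrate s hs) (norm_nonneg _))

end InnerProductSpace

/-- ISS-type bound for the perturbed gradient-flow error
dynamics before the first jump. -/
theorem stmt8 (n : ℕ) (hn : 1 ≤ n) (γ : ℝ) (hγ : 0 < γ) (t₀ T : ℝ) (ht : t₀ ≤ T)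
    (φM : ℝ) (hφM : 0 ≤ φM)
    (φ : ℝ → EuclideanSpace ℝ (Fin n)) (hφc : Continuous φ)
    (hbound : ∀ s ∈ Set.Icc t₀ T, ‖φ s‖ ≤ φM)
    (w : ℝ → ℝ) (hw : Continuous w)
    (θ : ℝ → EuclideanSpace ℝ (Fin n))
    (hθ : ∀ t ∈ Set.Icc t₀ T,
      HasDerivAt θ (-(γ * ⟪φ t, θ t⟫) • φ t + (γ * w t) • φ t) t) :
    ∀ t ∈ Set.Icc t₀ T, ‖θ t‖ ≤ ‖θ t₀‖ + γ * φM * ∫ s in t₀..t, |w s| :=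
  stmt8_general hγ.le (fun s hs => hbound s (Ioo_subset_Icc_self hs)) hw.integrableOn_Icc
    (HasDerivAt.continuousOn hθ) fun t ht => (hθ t (Ioo_subset_Icc_self ht)).hasDerivWithinAt
end

section
/- Let n ≥ 1, let δ > 0, let γ₁, γ₂ > 0 with γ₁ ≠ γ₂, and let φ : ℝ → ℝⁿ be continuous with |φ(s)| ≤ φ_M for all s ≥ 0, where φ_M ≥ 0. Assume there exist μ ∈ (0, δ] and η > 0 such that φ is μ-persistently exciting with level η, i.e., for every σ ≥ 0 and every v ∈ ℝⁿ, ∫_{σ}^{σ+μ} ⟨φ(s), v⟩² ds ≥ η|v|². Assume further 0 < φ_M²γ₂δ < 1 and 0 < (1 − 2ηγ₁/(1 + φ_M²γ₁δ)²)(1 + 2γ₂φ_M²δ/(1 − φ_M²γ₂δ)²) < 1. Then, for every q ∈ ℕ, the matrix Φ₁((q+1)δ, qδ) − Φ₂((q+1)δ, qδ) is invertible, where Φᵢ(·, qδ) denotes the state transition matrix solving Φ'(t) = −γᵢ φ(t)φ(t)ᵀ Φ(t) with Φ(qδ) = I. -/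
open scoped RealInnerProductSpace

/-!
Write `u = ⟪φ, x⟫` for a solution of `x' = -γ ⟪φ, x⟫ φ` on `[a, b]` with `‖φ‖ ≤ M`. The identity
`(‖x‖²)' = -2γ u²` bounds `‖x b‖` from both sides. Since `x` moves by at most `γ M ∫ |u|`, the
function `⟪φ, x a⟫` is close to `u`, so persistent excitation bounds `∫ u²` from below and `‖x‖`
decreases by a definite factor; this is used for `γ₁`. Since `u² ≤ M² ‖x‖²`, also
`‖x a‖² ≤ exp (2 γ M² (b - a)) ‖x b‖²`; this is used for `γ₂`. A kernel vector of `Φ₁ - Φ₂` is the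
common initial value of two solutions with a common final value, so the two bounds force it to
vanish once the product of their factors is less than `1`. With `α = γ₂ M² δ < 1`, the growth factor
`1 + 2 α / (1 - α) ^ 2 = (1 + α ^ 2) / (1 - α) ^ 2` is at least `(1 - α)⁻² ≥ exp (2 α)`.
-/

section GeneralInequalities

open Set MeasureTheory

variable {a b : ℝ} {f g : ℝ → ℝ}

lemma sq_intervalIntegral_le (hab : a ≤ b) (hf : IntervalIntegrable f volume a b)
    (hf_sq : IntervalIntegrable (fun s ↦ f s ^ 2) volume a b) :
    (∫ s in a..b, f s) ^ 2 ≤ (b - a) * ∫ s in a..b, f s ^ 2 := by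
  have quadratic_nonneg (c : ℝ) :
      0 ≤ (b - a) * (c * c) + (2 * ∫ s in a..b, f s) * c + ∫ s in a..b, f s ^ 2 := calc
    0 ≤ ∫ s in a..b, (c + f s) ^ 2 :=
      intervalIntegral.integral_nonneg hab fun _ _ ↦ sq_nonneg _
    _ = ∫ s in a..b, (c ^ 2 + 2 * c * f s + f s ^ 2) := by simp only [add_sq]
    _ = _ := by
      rw [intervalIntegral.integral_add
          (intervalIntegrable_const.add (hf.const_mul _)) hf_sq,
        intervalIntegral.integral_add intervalIntegrable_const (hf.const_mul _),
        intervalIntegral.integral_const_mul, intervalIntegral.integral_const, smul_eq_mul]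
      ring
  have := discrim_le_zero quadratic_nonneg
  rw [discrim] at this
  linarith

lemma intervalIntegral_sq_le_of_abs_le_abs_add {c : ℝ} (hc : 0 ≤ c) (hab : a ≤ b)
    (hf : ContinuousOn f (Icc a b)) (hg : ContinuousOn g (Icc a b))
    (h : ∀ s ∈ Icc a b, |g s| ≤ |f s| + c * ∫ r in a..b, |f r|) :
    ∫ s in a..b, g s ^ 2 ≤ (1 + c * (b - a)) ^ 2 * ∫ s in a..b, f s ^ 2 := by
  have hf_abs := hf.abs.intervalIntegrable_of_Icc (μ := volume) hab
  have hf_sq : IntervalIntegrable (fun s ↦ f s ^ 2) volume a b :=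
    (hf.pow 2).intervalIntegrable_of_Icc hab
  set I := ∫ r in a..b, |f r|
  have hlin : IntervalIntegrable (fun s ↦ f s ^ 2 + 2 * (c * I) * |f s|) volume a b :=
    hf_sq.add (hf_abs.const_mul _)
  have sq_I_le : I ^ 2 ≤ (b - a) * ∫ s in a..b, f s ^ 2 := by
    simpa only [sq_abs] using
      sq_intervalIntegral_le hab hf_abs (by simpa only [sq_abs] using hf_sq)
  calc ∫ s in a..b, g s ^ 2
      ≤ ∫ s in a..b, (f s ^ 2 + 2 * (c * I) * |f s| + (c * I) ^ 2) := by
        refine intervalIntegral.integral_mono_on hab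
          ((hg.pow 2).intervalIntegrable_of_Icc hab) (hlin.add intervalIntegrable_const)
          fun s hs ↦ ?_
        calc g s ^ 2 = |g s| ^ 2 := (sq_abs _).symm
          _ ≤ (|f s| + c * I) ^ 2 := pow_le_pow_left₀ (abs_nonneg _) (h s hs) 2
          _ = f s ^ 2 + 2 * (c * I) * |f s| + (c * I) ^ 2 := by rw [add_sq, sq_abs]; ring
    _ = (∫ s in a..b, f s ^ 2) + (2 * c + c ^ 2 * (b - a)) * I ^ 2 := by
        rw [intervalIntegral.integral_add hlin intervalIntegrable_const,
          intervalIntegral.integral_add hf_sq (hf_abs.const_mul _),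
          intervalIntegral.integral_const_mul, intervalIntegral.integral_const, smul_eq_mul]
        ring
    _ ≤ (∫ s in a..b, f s ^ 2) +
          (2 * c + c ^ 2 * (b - a)) * ((b - a) * ∫ s in a..b, f s ^ 2) := by
        have := sub_nonneg.2 hab
        gcongr
    _ = (1 + c * (b - a)) ^ 2 * ∫ s in a..b, f s ^ 2 := by ring

lemma exp_two_mul_le_one_add_div {α : ℝ} (hα₀ : 0 ≤ α) (hα₁ : α < 1) :
    Real.exp (2 * α) ≤ 1 + 2 * α / (1 - α) ^ 2 := by
  have : 0 < 1 - α := sub_pos.2 hα₁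
  calc Real.exp (2 * α) = Real.exp α ^ 2 := by rw [← Real.exp_nat_mul]; norm_num
    _ ≤ (1 / (1 - α)) ^ 2 := by
        gcongr
        exact Real.exp_bound_div_one_sub_of_interval hα₀ hα₁
    _ ≤ (1 + α ^ 2) / (1 - α) ^ 2 := by
        rw [div_pow, one_pow]
        gcongr
        nlinarith
    _ = 1 + 2 * α / (1 - α) ^ 2 := by field_simp; ring

lemma mul_exp_two_mul_lt_one {c α : ℝ} (hα₀ : 0 ≤ α) (hα₁ : α < 1)
    (h : c * (1 + 2 * α / (1 - α) ^ 2) < 1) : c * Real.exp (2 * α) < 1 := by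
  rcases le_total c 0 with hc | hc
  · exact (mul_nonpos_of_nonpos_of_nonneg hc (Real.exp_nonneg _)).trans_lt one_pos
  · exact (mul_le_mul_of_nonneg_left (exp_two_mul_le_one_add_div hα₀ hα₁) hc).trans_lt h

end GeneralInequalities

section ErrorDynamics

variable {E : Type*} [NormedAddCommGroup E] [InnerProductSpace ℝ E]

/-- The vector field `(t, y) ↦ -γ φ(t) φ(t)ᵀ y` of the error dynamics, in coordinate-free form. Its
trajectories are the curves `x` with `IsIntegralCurveOn x (errorField γ φ)`. -/
def errorField (γ : ℝ) (φ : ℝ → E) (t : ℝ) (y : E) : E :=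
  -(γ * ⟪φ t, y⟫) • φ t

namespace errorField

open Set MeasureTheory

variable {γ M a b : ℝ} {φ x : ℝ → E}

lemma hasDerivWithinAt_norm_sq {s : Set ℝ} {t : ℝ} (hx : IsIntegralCurveOn x (errorField γ φ) s)
    (ht : t ∈ s) :
    HasDerivWithinAt (fun r ↦ ‖x r‖ ^ 2) (-(2 * γ) * ⟪φ t, x t⟫ ^ 2) s t := by
  refine (hx t ht).norm_sq.congr_deriv ?_
  rw [errorField, inner_smul_right, real_inner_comm]
  ring

lemma norm_sq_terminal_eq (hab : a ≤ b) (hφ : ContinuousOn φ (Icc a b))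
    (hx : IsIntegralCurveOn x (errorField γ φ) (Icc a b)) :
    ‖x b‖ ^ 2 = ‖x a‖ ^ 2 - 2 * γ * ∫ s in a..b, ⟪φ s, x s⟫ ^ 2 := by
  have hint : IntervalIntegrable (fun s ↦ -(2 * γ) * ⟪φ s, x s⟫ ^ 2) volume a b :=
    (continuousOn_const.mul ((hφ.inner hx.continuousOn).pow 2)).intervalIntegrable_of_Icc hab
  have ftc := intervalIntegral.integral_eq_sub_of_hasDerivAt_of_le hab
    (f := fun s ↦ ‖x s‖ ^ 2) (hx.continuousOn.norm.pow 2)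
    (fun t ht ↦ (hasDerivWithinAt_norm_sq hx (Ioo_subset_Icc_self ht)).hasDerivAt
      (Icc_mem_nhds ht.1 ht.2)) hint
  rw [intervalIntegral.integral_const_mul] at ftc
  linarith

lemma abs_inner_sub_initial_le (hγ : 0 ≤ γ) (hφ : ContinuousOn φ (Icc a b))
    (hM : ∀ s ∈ Icc a b, ‖φ s‖ ≤ M) (hx : IsIntegralCurveOn x (errorField γ φ) (Icc a b))
    {t : ℝ} (ht : t ∈ Icc a b) (p : E) :
    |⟪p, x t - x a⟫| ≤ γ * (‖p‖ * M) * ∫ s in a..b, |⟪φ s, x s⟫| := by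
  have hsub : Icc a t ⊆ Icc a b := Icc_subset_Icc_right ht.2
  have hu : ContinuousOn (fun s ↦ ⟪φ s, x s⟫) (Icc a b) := hφ.inner hx.continuousOn
  have hu_abs := hu.abs.intervalIntegrable_of_Icc (μ := volume) (ht.1.trans ht.2)
  have hv : ContinuousOn (fun s ↦ ⟪p, errorField γ φ s (x s)⟫) (Icc a b) :=
    continuousOn_const.inner ((continuousOn_const.mul hu).neg.smul hφ)
  have ftc : ∫ s in a..t, ⟪p, errorField γ φ s (x s)⟫ = ⟪p, x t - x a⟫ := by
    rw [inner_sub_right]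
    refine intervalIntegral.integral_eq_sub_of_hasDerivAt_of_le (f := fun s ↦ ⟪p, x s⟫) ht.1
      (continuousOn_const.inner (hx.continuousOn.mono hsub)) (fun s hs ↦ ?_)
      ((hv.mono hsub).intervalIntegrable_of_Icc ht.1)
    have hs' : Icc a b ∈ nhds s := Icc_mem_nhds hs.1 (hs.2.trans_le ht.2)
    simpa using (hasDerivAt_const s p).inner ℝ ((hx s (mem_of_mem_nhds hs')).hasDerivAt hs')
  have speed_le (s : ℝ) (hs : s ∈ Icc a b) :
      |⟪p, errorField γ φ s (x s)⟫| ≤ γ * (‖p‖ * M) * |⟪φ s, x s⟫| := calc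
    |⟪p, errorField γ φ s (x s)⟫| = γ * |⟪φ s, x s⟫| * |⟪p, φ s⟫| := by
        rw [errorField, inner_smul_right, abs_mul, abs_neg, abs_mul, abs_of_nonneg hγ]
    _ ≤ γ * |⟪φ s, x s⟫| * (‖p‖ * M) := by
        gcongr
        exact (abs_real_inner_le_norm _ _).trans (by gcongr; exact hM s hs)
    _ = γ * (‖p‖ * M) * |⟪φ s, x s⟫| := by ring
  calc |⟪p, x t - x a⟫| ≤ ∫ s in a..t, |⟪p, errorField γ φ s (x s)⟫| :=
        ftc ▸ intervalIntegral.abs_integral_le_integral_abs ht.1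
    _ ≤ ∫ s in a..b, |⟪p, errorField γ φ s (x s)⟫| :=
        intervalIntegral.integral_mono_interval le_rfl ht.1 ht.2
          (Filter.Eventually.of_forall fun _ ↦ abs_nonneg _)
          (hv.abs.intervalIntegrable_of_Icc (ht.1.trans ht.2))
    _ ≤ ∫ s in a..b, γ * (‖p‖ * M) * |⟪φ s, x s⟫| :=
        intervalIntegral.integral_mono_on (ht.1.trans ht.2)
          (hv.abs.intervalIntegrable_of_Icc (ht.1.trans ht.2)) (hu_abs.const_mul _) speed_le
    _ = γ * (‖p‖ * M) * ∫ s in a..b, |⟪φ s, x s⟫| := intervalIntegral.integral_const_mul _ _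

lemma integral_inner_initial_sq_le (hab : a ≤ b) (hγ : 0 ≤ γ) (hφ : ContinuousOn φ (Icc a b))
    (hM : ∀ s ∈ Icc a b, ‖φ s‖ ≤ M) (hx : IsIntegralCurveOn x (errorField γ φ) (Icc a b)) :
    ∫ s in a..b, ⟪φ s, x a⟫ ^ 2 ≤
      (1 + M ^ 2 * γ * (b - a)) ^ 2 * ∫ s in a..b, ⟪φ s, x s⟫ ^ 2 := by
  have hM₀ : 0 ≤ M := (norm_nonneg _).trans (hM a (left_mem_Icc.2 hab))
  refine intervalIntegral_sq_le_of_abs_le_abs_add (by positivity) hab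
    (hφ.inner hx.continuousOn) (hφ.inner continuousOn_const) fun s hs ↦ ?_
  calc |⟪φ s, x a⟫| = |⟪φ s, x s⟫ - ⟪φ s, x s - x a⟫| := by rw [inner_sub_right, sub_sub_cancel]
    _ ≤ |⟪φ s, x s⟫| + |⟪φ s, x s - x a⟫| := abs_sub _ _
    _ ≤ |⟪φ s, x s⟫| + γ * (‖φ s‖ * M) * ∫ r in a..b, |⟪φ r, x r⟫| := by
        gcongr
        exact abs_inner_sub_initial_le hγ hφ hM hx hs _
    _ ≤ |⟪φ s, x s⟫| + γ * (M * M) * ∫ r in a..b, |⟪φ r, x r⟫| := by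
        have := intervalIntegral.integral_nonneg (μ := volume) hab
          fun r _ ↦ abs_nonneg ⟪φ r, x r⟫
        gcongr
        exact hM s hs
    _ = |⟪φ s, x s⟫| + M ^ 2 * γ * ∫ r in a..b, |⟪φ r, x r⟫| := by ring

lemma norm_sq_terminal_le {η : ℝ} (hab : a ≤ b) (hγ : 0 ≤ γ) (hφ : ContinuousOn φ (Icc a b))
    (hM : ∀ s ∈ Icc a b, ‖φ s‖ ≤ M) (hx : IsIntegralCurveOn x (errorField γ φ) (Icc a b))
    (hη : η * ‖x a‖ ^ 2 ≤ ∫ s in a..b, ⟪φ s, x a⟫ ^ 2) :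
    ‖x b‖ ^ 2 ≤ (1 - 2 * η * γ / (1 + M ^ 2 * γ * (b - a)) ^ 2) * ‖x a‖ ^ 2 := by
  have output_ge : η * ‖x a‖ ^ 2 / (1 + M ^ 2 * γ * (b - a)) ^ 2 ≤
      ∫ s in a..b, ⟪φ s, x s⟫ ^ 2 :=
    div_le_of_le_mul₀ (by positivity)
      (intervalIntegral.integral_nonneg hab fun _ _ ↦ sq_nonneg _)
      ((hη.trans (integral_inner_initial_sq_le hab hγ hφ hM hx)).trans_eq (mul_comm _ _))
  calc ‖x b‖ ^ 2 = ‖x a‖ ^ 2 - 2 * γ * ∫ s in a..b, ⟪φ s, x s⟫ ^ 2 :=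
        norm_sq_terminal_eq hab hφ hx
    _ ≤ ‖x a‖ ^ 2 - 2 * γ * (η * ‖x a‖ ^ 2 / (1 + M ^ 2 * γ * (b - a)) ^ 2) := by gcongr
    _ = (1 - 2 * η * γ / (1 + M ^ 2 * γ * (b - a)) ^ 2) * ‖x a‖ ^ 2 := by ring

lemma norm_sq_initial_le (hab : a ≤ b) (hγ : 0 ≤ γ) (hM : ∀ s ∈ Icc a b, ‖φ s‖ ≤ M)
    (hx : IsIntegralCurveOn x (errorField γ φ) (Icc a b)) :
    ‖x a‖ ^ 2 ≤ Real.exp (2 * (M ^ 2 * γ * (b - a))) * ‖x b‖ ^ 2 := by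
  have hderiv (t : ℝ) (ht : t ∈ Icc a b) :
      HasDerivWithinAt (fun r ↦ Real.exp (2 * (M ^ 2 * γ * (r - a))) * ‖x r‖ ^ 2)
        (Real.exp (2 * (M ^ 2 * γ * (t - a))) *
          (2 * γ * ((M * ‖x t‖) ^ 2 - ⟪φ t, x t⟫ ^ 2))) (Icc a b) t := by
    have hexp := (((hasDerivWithinAt_id t (Icc a b)).sub_const a).const_mul (M ^ 2 * γ)
      |>.const_mul 2).exp
    refine (hexp.mul (hasDerivWithinAt_norm_sq hx ht)).congr_deriv ?_
    simp only [id]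
    ring
  have hmono := monotoneOn_of_hasDerivWithinAt_nonneg (convex_Icc a b)
    (fun t ht ↦ (hderiv t ht).continuousWithinAt)
    (fun t ht ↦ (hderiv t (interior_subset ht)).mono interior_subset) fun t ht ↦ by
      have output_sq_le : |⟪φ t, x t⟫| ^ 2 ≤ (M * ‖x t‖) ^ 2 := by
        gcongr
        exact (abs_real_inner_le_norm _ _).trans (by gcongr; exact hM t (interior_subset ht))
      rw [sq_abs, ← sub_nonneg] at output_sq_le
      positivity
  simpa using hmono (left_mem_Icc.2 hab) (right_mem_Icc.2 hab) hab

lemma initial_eq_zero_of_terminal_eq {γ₁ γ₂ η : ℝ} {x₁ x₂ : ℝ → E} (hab : a ≤ b)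
    (hγ₁ : 0 ≤ γ₁) (hγ₂ : 0 ≤ γ₂) (hφ : ContinuousOn φ (Icc a b))
    (hM : ∀ s ∈ Icc a b, ‖φ s‖ ≤ M)
    (hη : η * ‖x₁ a‖ ^ 2 ≤ ∫ s in a..b, ⟪φ s, x₁ a⟫ ^ 2)
    (hlt : (1 - 2 * η * γ₁ / (1 + M ^ 2 * γ₁ * (b - a)) ^ 2) *
      Real.exp (2 * (M ^ 2 * γ₂ * (b - a))) < 1)
    (hx₁ : IsIntegralCurveOn x₁ (errorField γ₁ φ) (Icc a b))
    (hx₂ : IsIntegralCurveOn x₂ (errorField γ₂ φ) (Icc a b))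
    (ha : x₁ a = x₂ a) (hb : x₁ b = x₂ b) : x₁ a = 0 := by
  by_contra hne
  have : ‖x₁ a‖ ^ 2 < ‖x₁ a‖ ^ 2 := calc
    ‖x₁ a‖ ^ 2 ≤ Real.exp (2 * (M ^ 2 * γ₂ * (b - a))) * ‖x₁ b‖ ^ 2 := by
        simpa only [ha, hb] using norm_sq_initial_le hab hγ₂ hM hx₂
    _ ≤ Real.exp (2 * (M ^ 2 * γ₂ * (b - a))) *
          ((1 - 2 * η * γ₁ / (1 + M ^ 2 * γ₁ * (b - a)) ^ 2) * ‖x₁ a‖ ^ 2) := by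
        gcongr
        exact norm_sq_terminal_le hab hγ₁ hφ hM hx₁ hη
    _ = (1 - 2 * η * γ₁ / (1 + M ^ 2 * γ₁ * (b - a)) ^ 2) *
          Real.exp (2 * (M ^ 2 * γ₂ * (b - a))) * ‖x₁ a‖ ^ 2 := by ring
    _ < ‖x₁ a‖ ^ 2 := mul_lt_of_lt_one_left (by positivity) hlt
  exact this.false

end errorField

/-- `φ` is `μ`-persistently exciting with level `η`: over every window of length `μ` starting at a
nonnegative time, `φ` has energy at least `η` in every direction. Both `μ` and `η` are meant to be
positive. -/
def IsPersistentlyExciting (φ : ℝ → E) (μ η : ℝ) : Prop :=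
  ∀ σ : ℝ, 0 ≤ σ → ∀ v : E, η * ‖v‖ ^ 2 ≤ ∫ s in σ..(σ + μ), ⟪φ s, v⟫ ^ 2

lemma IsPersistentlyExciting.mul_norm_sq_le_integral {φ : ℝ → E} {μ η a b : ℝ}
    (hPE : IsPersistentlyExciting φ μ η) (hμ : 0 ≤ μ) (ha : 0 ≤ a) (hab : a + μ ≤ b)
    (hφ : ContinuousOn φ (Set.Icc a b)) (v : E) :
    η * ‖v‖ ^ 2 ≤ ∫ s in a..b, ⟪φ s, v⟫ ^ 2 :=
  (hPE a ha v).trans <| intervalIntegral.integral_mono_interval le_rfl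
    (le_add_of_nonneg_right hμ) hab (Filter.Eventually.of_forall fun _ ↦ sq_nonneg _)
    (((hφ.inner continuousOn_const).pow 2).intervalIntegrable_of_Icc (by linarith))

end ErrorDynamics

section StateTransition

open scoped Matrix

variable {ι : Type*} [Fintype ι] [DecidableEq ι]

/-- `Φ` is the state transition matrix on `[a, b]` of the error dynamics with gain `γ` and
regressor `φ`, started at time `a`. The matrix differential equation is stated entrywise, so that no
norm on matrices has to be chosen. -/
structure IsStateTransitionOn (γ : ℝ) (φ : ℝ → EuclideanSpace ℝ ι) (Φ : ℝ → Matrix ι ι ℝ)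
    (a b : ℝ) : Prop where
  initial : Φ a = 1
  hasDerivWithinAt : ∀ t ∈ Set.Icc a b, ∀ i j, HasDerivWithinAt (fun s ↦ Φ s i j)
    ((-γ • (Matrix.vecMulVec (φ t) (φ t) * Φ t)) i j) (Set.Icc a b) t

namespace IsStateTransitionOn

variable {a b : ℝ} {φ : ℝ → EuclideanSpace ℝ ι}

lemma isIntegralCurveOn_mulVec {γ : ℝ} {Φ : ℝ → Matrix ι ι ℝ}
    (hΦ : IsStateTransitionOn γ φ Φ a b) (v : ι → ℝ) :
    IsIntegralCurveOn (fun t ↦ WithLp.toLp 2 (Φ t *ᵥ v)) (errorField γ φ) (Set.Icc a b) := by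
  intro t ht
  have hmulVec : HasDerivWithinAt (fun s ↦ Φ s *ᵥ v)
      ((-γ • (Matrix.vecMulVec (φ t) (φ t) * Φ t)) *ᵥ v) (Set.Icc a b) t :=
    hasDerivWithinAt_pi.2 fun i ↦
      HasDerivWithinAt.fun_sum fun j _ ↦ (hΦ.hasDerivWithinAt t ht i j).mul_const (v j)
  have field_eq : WithLp.toLp 2 ((-γ • (Matrix.vecMulVec (φ t) (φ t) * Φ t)) *ᵥ v) =
      errorField γ φ t (WithLp.toLp 2 (Φ t *ᵥ v)) := by
    rw [Matrix.smul_mulVec, ← Matrix.mulVec_mulVec, Matrix.vecMulVec_mulVec]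
    ext i
    simp only [errorField, EuclideanSpace.inner_eq_star_dotProduct, star_trivial, dotProduct_comm,
      op_smul_eq_smul, Pi.smul_apply, PiLp.smul_apply, smul_eq_mul]
    ring
  exact ((PiLp.continuousLinearEquiv 2 ℝ fun _ : ι ↦ ℝ).symm.hasFDerivAt.comp_hasDerivWithinAt t
    hmulVec).congr_deriv field_eq

lemma isUnit_sub {γ₁ γ₂ M η : ℝ} {Φ₁ Φ₂ : ℝ → Matrix ι ι ℝ} (hab : a ≤ b)
    (hγ₁ : 0 ≤ γ₁) (hγ₂ : 0 ≤ γ₂) (hφ : ContinuousOn φ (Set.Icc a b))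
    (hM : ∀ s ∈ Set.Icc a b, ‖φ s‖ ≤ M)
    (hη : ∀ v, η * ‖v‖ ^ 2 ≤ ∫ s in a..b, ⟪φ s, v⟫ ^ 2)
    (hlt : (1 - 2 * η * γ₁ / (1 + M ^ 2 * γ₁ * (b - a)) ^ 2) *
      Real.exp (2 * (M ^ 2 * γ₂ * (b - a))) < 1)
    (hΦ₁ : IsStateTransitionOn γ₁ φ Φ₁ a b) (hΦ₂ : IsStateTransitionOn γ₂ φ Φ₂ a b) :
    IsUnit (Φ₁ b - Φ₂ b) := by
  rw [← Matrix.mulVec_injective_iff_isUnit, ← Matrix.coe_mulVecLin,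
    injective_iff_map_eq_zero]
  intro v hv
  rw [Matrix.mulVecLin_apply, Matrix.sub_mulVec, sub_eq_zero] at hv
  have initial_eq_zero := errorField.initial_eq_zero_of_terminal_eq hab hγ₁ hγ₂ hφ hM (hη _) hlt
    (hΦ₁.isIntegralCurveOn_mulVec v) (hΦ₂.isIntegralCurveOn_mulVec v)
    (by rw [hΦ₁.initial, hΦ₂.initial]) (by rw [hv])
  simpa [hΦ₁.initial] using initial_eq_zero

end IsStateTransitionOn

theorem stmt12_general {δ γ₁ γ₂ M μ η : ℝ} {φ : ℝ → EuclideanSpace ℝ ι}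
    (hγ₁ : 0 ≤ γ₁) (hγ₂ : 0 ≤ γ₂) (hφ : ContinuousOn φ (Set.Ici 0)) (hM : ∀ s, 0 ≤ s → ‖φ s‖ ≤ M)
    (hμ : 0 ≤ μ) (hμδ : μ ≤ δ) (hPE : IsPersistentlyExciting φ μ η)
    (hlt : (1 - 2 * η * γ₁ / (1 + M ^ 2 * γ₁ * δ) ^ 2) * Real.exp (2 * (M ^ 2 * γ₂ * δ)) < 1)
    {Φ₁ Φ₂ : ℕ → ℝ → Matrix ι ι ℝ}
    (hΦ₁ : ∀ q : ℕ, IsStateTransitionOn γ₁ φ (Φ₁ q) (q * δ) ((q + 1) * δ))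
    (hΦ₂ : ∀ q : ℕ, IsStateTransitionOn γ₂ φ (Φ₂ q) (q * δ) ((q + 1) * δ)) (q : ℕ) :
    IsUnit (Φ₁ q ((q + 1) * δ) - Φ₂ q ((q + 1) * δ)) := by
  have hδ : 0 ≤ δ := hμ.trans hμδ
  have start_nonneg : 0 ≤ q * δ := by positivity
  have hlen : (q + 1) * δ - q * δ = δ := by ring
  have hsub : Set.Icc (q * δ) ((q + 1) * δ) ⊆ Set.Ici 0 := fun _ hs ↦ start_nonneg.trans hs.1
  exact (hΦ₁ q).isUnit_sub (by linarith) hγ₁ hγ₂ (hφ.mono hsub) (fun s hs ↦ hM s (hsub hs))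
    (hPE.mul_norm_sq_le_integral hμ start_nonneg (by linarith) (hφ.mono hsub))
    (by rwa [hlen]) (hΦ₂ q)

end StateTransition

/-- Under `μ`-persistent excitation, the matrices
`Φ₁((q+1)δ, qδ) − Φ₂((q+1)δ, qδ)` are invertible at every jump `q`. -/
theorem stmt12 (n : ℕ) (hn : 1 ≤ n) (δ : ℝ) (hδ : 0 < δ)
    (γ₁ γ₂ : ℝ) (hγ₁ : 0 < γ₁) (hγ₂ : 0 < γ₂) (hγ : γ₁ ≠ γ₂)
    (φM : ℝ) (hφM : 0 ≤ φM)
    (φ : ℝ → EuclideanSpace ℝ (Fin n)) (hφc : Continuous φ)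
    (hbound : ∀ s : ℝ, 0 ≤ s → ‖φ s‖ ≤ φM)
    (μ η : ℝ) (hμ : 0 < μ) (hμδ : μ ≤ δ) (hη : 0 < η)
    (hPE : ∀ σ : ℝ, 0 ≤ σ → ∀ v : EuclideanSpace ℝ (Fin n),
      η * ‖v‖ ^ 2 ≤ ∫ s in σ..(σ + μ), ⟪φ s, v⟫ ^ 2)
    (h7 : 0 < φM ^ 2 * γ₂ * δ) (h7' : φM ^ 2 * γ₂ * δ < 1)
    (h8 : 0 < (1 - 2 * η * γ₁ / (1 + φM ^ 2 * γ₁ * δ) ^ 2) *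
      (1 + 2 * γ₂ * φM ^ 2 * δ / (1 - φM ^ 2 * γ₂ * δ) ^ 2))
    (h8' : (1 - 2 * η * γ₁ / (1 + φM ^ 2 * γ₁ * δ) ^ 2) *
      (1 + 2 * γ₂ * φM ^ 2 * δ / (1 - φM ^ 2 * γ₂ * δ) ^ 2) < 1)
    (Φ₁ Φ₂ : ℕ → ℝ → Matrix (Fin n) (Fin n) ℝ)
    (hΦ₁0 : ∀ q : ℕ, Φ₁ q (q * δ) = 1) (hΦ₂0 : ∀ q : ℕ, Φ₂ q (q * δ) = 1)
    (hΦ₁ : ∀ q : ℕ, ∀ t ∈ Set.Icc ((q : ℝ) * δ) (((q : ℝ) + 1) * δ), ∀ i j,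
      HasDerivAt (fun s => Φ₁ q s i j)
        ((-γ₁ • (Matrix.vecMulVec (φ t) (φ t) * Φ₁ q t)) i j) t)
    (hΦ₂ : ∀ q : ℕ, ∀ t ∈ Set.Icc ((q : ℝ) * δ) (((q : ℝ) + 1) * δ), ∀ i j,
      HasDerivAt (fun s => Φ₂ q s i j)
        ((-γ₂ • (Matrix.vecMulVec (φ t) (φ t) * Φ₂ q t)) i j) t) :
    ∀ q : ℕ, IsUnit (Φ₁ q (((q : ℝ) + 1) * δ) - Φ₂ q (((q : ℝ) + 1) * δ)) :=
  stmt12_general hγ₁.le hγ₂.le hφc.continuousOn hbound hμ.le hμδ hPE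
    (mul_exp_two_mul_lt_one h7.le h7' (by linear_combination h8'))
    (fun q ↦ ⟨hΦ₁0 q, fun t ht i j ↦ (hΦ₁ q t ht i j).hasDerivWithinAt⟩)
    (fun q ↦ ⟨hΦ₂0 q, fun t ht i j ↦ (hΦ₂ q t ht i j).hasDerivWithinAt⟩)
end

section
/- For every η > 0 and every φ_M > 0 there exist δ > 0 and γ₁, γ₂ > 0 with γ₁ ≠ γ₂ such that 0 < φ_M²γ₂δ < 1 and 0 < (1 − 2ηγ₁/(1 + φ_M²γ₁δ)²)(1 + 2γ₂φ_M²δ/(1 − φ_M²γ₂δ)²) < 1. -/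
/-!
Put `x = φM² γ₁ δ`. Since `4x ≤ (1 + x)²`, once `η < 2 φM² δ` the first factor lies strictly between
`0` and `1` for every `γ₁ > 0`. The second factor tends to `1` as `γ₂ → 0`, so the product stays in
`(0, 1)` for all sufficiently small `γ₂ > 0`.
-/

open Filter Set Topology

namespace HybridEstimator

variable {η φM δ γ γ₁ : ℝ}

/-- The first factor of the product in design condition (8), with `γ` in the role of `γ₁`: the
contraction that has to outweigh `expansionFactor`. -/
noncomputable def contractionFactor (η φM δ γ : ℝ) : ℝ :=
  1 - 2 * η * γ / (1 + φM ^ 2 * γ * δ) ^ 2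

/-- The second factor of the product in design condition (8), with `γ` in the role of `γ₂`: the
growth that `contractionFactor` has to outweigh. At the pole `φM ^ 2 * γ * δ = 1` it takes the
junk value `1`. -/
noncomputable def expansionFactor (φM δ γ : ℝ) : ℝ :=
  1 + 2 * γ * φM ^ 2 * δ / (1 - φM ^ 2 * γ * δ) ^ 2

/-- Conditions (7) and (8) on the parameters of the hybrid estimator, in this order. Positivity of
`δ`, `γ₁`, `γ₂` and distinctness of the gains are not included. -/
def DesignConditions (η φM δ γ₁ γ₂ : ℝ) : Prop :=
  φM ^ 2 * γ₂ * δ ∈ Ioo 0 1 ∧ contractionFactor η φM δ γ₁ * expansionFactor φM δ γ₂ ∈ Ioo 0 1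

theorem contractionFactor_lt_one (hη : 0 < η) (hδ : 0 ≤ δ) (hγ : 0 < γ) :
    contractionFactor η φM δ γ < 1 :=
  sub_lt_self 1 (by positivity)

theorem contractionFactor_pos (hδ : 0 ≤ δ) (hηδ : η < 2 * φM ^ 2 * δ) (hγ : 0 < γ) :
    0 < contractionFactor η φM δ γ := by
  have hlt : 2 * η * γ < (1 + φM ^ 2 * γ * δ) ^ 2 :=
    calc 2 * η * γ < 2 * (2 * φM ^ 2 * δ) * γ := by gcongr
      _ = 4 * 1 * (φM ^ 2 * γ * δ) := by ring
      _ ≤ (1 + φM ^ 2 * γ * δ) ^ 2 := four_mul_le_sq_add 1 _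
  exact sub_pos.2 ((div_lt_one (by positivity)).2 hlt)

theorem contractionFactor_mem_Ioo (hη : 0 < η) (hηδ : η < 2 * φM ^ 2 * δ) (hγ : 0 < γ) :
    contractionFactor η φM δ γ ∈ Ioo 0 1 := by
  have hδ : 0 ≤ δ := (pos_of_mul_pos_right (hη.trans hηδ) (by positivity)).le
  exact ⟨contractionFactor_pos hδ hηδ hγ, contractionFactor_lt_one hη hδ hγ⟩

theorem tendsto_expansionFactor_nhds_zero (φM δ : ℝ) :
    Tendsto (expansionFactor φM δ) (𝓝 0) (𝓝 1) := by
  have hcont : ContinuousAt (expansionFactor φM δ) 0 := by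
    unfold expansionFactor
    fun_prop (disch := simp)
  simpa [expansionFactor] using hcont.tendsto

theorem eventually_contractionFactor_mul_expansionFactor_mem_Ioo
    (hη : 0 < η) (hηδ : η < 2 * φM ^ 2 * δ) (hγ₁ : 0 < γ₁) :
    ∀ᶠ γ₂ in 𝓝 0, contractionFactor η φM δ γ₁ * expansionFactor φM δ γ₂ ∈ Ioo 0 1 := by
  have hlim : Tendsto (fun γ₂ ↦ contractionFactor η φM δ γ₁ * expansionFactor φM δ γ₂)
      (𝓝 0) (𝓝 (contractionFactor η φM δ γ₁)) := by
    simpa only [mul_one] using (tendsto_expansionFactor_nhds_zero φM δ).const_mul _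
  exact hlim.eventually_mem (isOpen_Ioo.mem_nhds (contractionFactor_mem_Ioo hη hηδ hγ₁))

theorem eventually_sq_mul_mul_mem_Ioo (hφδ : 0 < φM ^ 2 * δ) :
    ∀ᶠ γ in 𝓝[>] 0, φM ^ 2 * γ * δ ∈ Ioo 0 1 := by
  have hcont : Continuous fun γ : ℝ ↦ φM ^ 2 * γ * δ := by fun_prop
  have hlt_one : ∀ᶠ γ in 𝓝 0, φM ^ 2 * γ * δ < 1 :=
    hcont.continuousAt.eventually_lt_const (by simp)
  filter_upwards [self_mem_nhdsWithin, hlt_one.filter_mono nhdsWithin_le_nhds] with γ hγ hlt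
  have hpos : 0 < φM ^ 2 * γ * δ := by
    rw [mul_right_comm]
    exact mul_pos hφδ hγ
  exact ⟨hpos, hlt⟩

theorem eventually_designConditions (hη : 0 < η) (hηδ : η < 2 * φM ^ 2 * δ) (hγ₁ : 0 < γ₁) :
    ∀ᶠ γ₂ in 𝓝[>] 0, DesignConditions η φM δ γ₁ γ₂ := by
  have hφδ : 0 < φM ^ 2 * δ := by linarith
  exact (eventually_sq_mul_mul_mem_Ioo hφδ).and
    ((eventually_contractionFactor_mul_expansionFactor_mem_Ioo hη hηδ hγ₁).filter_mono
      nhdsWithin_le_nhds)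

end HybridEstimator

/-- The design conditions (7)–(8) of the hybrid estimator are
always satisfiable. -/
theorem stmt13 (η φM : ℝ) (hη : 0 < η) (hφM : 0 < φM) :
    ∃ δ γ₁ γ₂ : ℝ, 0 < δ ∧ 0 < γ₁ ∧ 0 < γ₂ ∧ γ₁ ≠ γ₂ ∧
      0 < φM ^ 2 * γ₂ * δ ∧ φM ^ 2 * γ₂ * δ < 1 ∧
      0 < (1 - 2 * η * γ₁ / (1 + φM ^ 2 * γ₁ * δ) ^ 2) *
        (1 + 2 * γ₂ * φM ^ 2 * δ / (1 - φM ^ 2 * γ₂ * δ) ^ 2) ∧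
      (1 - 2 * η * γ₁ / (1 + φM ^ 2 * γ₁ * δ) ^ 2) *
        (1 + 2 * γ₂ * φM ^ 2 * δ / (1 - φM ^ 2 * γ₂ * δ) ^ 2) < 1 := by
  have hδ : 0 < η / φM ^ 2 := by positivity
  have hηδ : η < 2 * φM ^ 2 * (η / φM ^ 2) := by
    rw [mul_assoc, mul_div_cancel₀ η (by positivity)]
    linarith
  have hsmall : ∀ᶠ γ₂ : ℝ in 𝓝[>] 0, γ₂ ∈ Ioo 0 1 := Ioo_mem_nhdsGT one_pos
  obtain ⟨γ₂, ⟨hγ₂, hγ₂_lt⟩, ⟨hpos, hlt_one⟩, hprod_pos, hprod_lt_one⟩ :=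
    (hsmall.and (HybridEstimator.eventually_designConditions hη hηδ one_pos)).exists
  exact ⟨η / φM ^ 2, 1, γ₂, hδ, one_pos, hγ₂, hγ₂_lt.ne', hpos, hlt_one, hprod_pos, hprod_lt_one⟩
end

section
/- Let Φ₁ and Φ₂ be invertible n×n real matrices with operator norms ‖Φ₁‖ ≤ κ₁ and ‖Φ₂⁻¹‖ ≤ κ₂, where κ₁, κ₂ ≥ 0 satisfy κ₁κ₂ < 1. Then Φ₁ − Φ₂ is invertible, and the matrix K₁ = −Φ₂(Φ₁ − Φ₂)⁻¹ satisfies ‖K₁‖ ≤ 1/(1 − κ₁κ₂) and ‖I − K₁‖ ≤ κ₁κ₂/(1 − κ₁κ₂). -/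
/-- The operator norm of a real `n × n` matrix, induced by the Euclidean norm
on `ℝⁿ`. -/
noncomputable def euclideanOpNorm {n : ℕ} (A : Matrix (Fin n) (Fin n) ℝ) : ℝ :=
  ‖(Matrix.toEuclideanCLM (𝕜 := ℝ) A :
      EuclideanSpace ℝ (Fin n) →L[ℝ] EuclideanSpace ℝ (Fin n))‖

/-
With `X = a b⁻¹`, the element `K = -b (a - b)⁻¹` is the Neumann sum `(1 - X)⁻¹`,
so that both `K = 1 + X K` and `X K = X + X (X K)`. If `‖X‖ < 1`, any solution of `y = c + X y` has
norm at most `‖c‖ / (1 - ‖X‖)`; the two bounds are the cases `c = 1` and `c = X`, since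
`1 - K = -X K`.
-/

theorem norm_le_div_one_sub_of_eq_add_mul {R : Type*} [NonUnitalSeminormedRing R]
    {x y c : R} {r : ℝ} (hx : ‖x‖ ≤ r) (hr : r < 1) (hy : y = c + x * y) :
    ‖y‖ ≤ ‖c‖ / (1 - r) := by
  have norm_le_add : ‖y‖ ≤ ‖c‖ + r * ‖y‖ :=
    calc ‖y‖ = ‖c + x * y‖ := congrArg norm hy
      _ ≤ ‖c‖ + ‖x‖ * ‖y‖ := norm_add_le_of_le le_rfl (norm_mul_le x y)
      _ ≤ ‖c‖ + r * ‖y‖ := by gcongr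
  rw [le_div_iff₀ (sub_pos.mpr hr)]
  linarith

theorem neg_mul_eq_one_add_mul_of_sub_mul_eq_one {R : Type*} [Ring R] {a c : R} {b : Rˣ}
    (h : (a - b) * c = 1) : -(b * c) = 1 + a * ↑b⁻¹ * -(b * c) := by
  have cancel : a * ↑b⁻¹ * -(b * c) = -(a * c) := by
    rw [mul_neg, ← mul_assoc, Units.inv_mul_cancel_right]
  rw [cancel, ← h]
  noncomm_ring

theorem isUnit_sub_of_norm_mul_inv_lt_one {R : Type*} [NormedRing R] [HasSummableGeomSeries R]
    {a : R} {b : Rˣ} (h : ‖a * ↑b⁻¹‖ < 1) : IsUnit (a - b) := by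
  have factor : a - b = -((1 - a * ↑b⁻¹) * b) := by
    rw [sub_mul, Units.inv_mul_cancel_right, one_mul, neg_sub]
  rw [factor]
  exact ((isUnit_one_sub_of_norm_lt_one h).mul b.isUnit).neg

theorem stmt14_general {R : Type*} [NormedRing R] [HasSummableGeomSeries R]
    (h_one : ‖(1 : R)‖ ≤ 1) {a b : R} (hb : IsUnit b) {κ₁ κ₂ : ℝ}
    (ha : ‖a‖ ≤ κ₁) (hb_inv : ‖Ring.inverse b‖ ≤ κ₂) (hκ : κ₁ * κ₂ < 1) :
    IsUnit (a - b) ∧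
      ‖-(b * Ring.inverse (a - b))‖ ≤ 1 / (1 - κ₁ * κ₂) ∧
      ‖1 - -(b * Ring.inverse (a - b))‖ ≤ κ₁ * κ₂ / (1 - κ₁ * κ₂) := by
  obtain ⟨b, rfl⟩ := hb
  rw [Ring.inverse_unit] at hb_inv
  set X : R := a * ↑b⁻¹
  set K : R := -(b * Ring.inverse (a - b))
  have hX : ‖X‖ ≤ κ₁ * κ₂ := norm_mul_le_of_le ha hb_inv
  have h_unit : IsUnit (a - b) := isUnit_sub_of_norm_mul_inv_lt_one (hX.trans_lt hκ)
  have hK : K = 1 + X * K :=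
    neg_mul_eq_one_add_mul_of_sub_mul_eq_one (Ring.mul_inverse_cancel _ h_unit)
  have hXK : X * K = X + X * (X * K) := by
    rw [← mul_one_add, ← hK]
  have h_nonneg : 0 ≤ 1 - κ₁ * κ₂ := sub_nonneg.mpr hκ.le
  refine ⟨h_unit, ?_, ?_⟩
  · calc ‖K‖ ≤ ‖(1 : R)‖ / (1 - κ₁ * κ₂) := norm_le_div_one_sub_of_eq_add_mul hX hκ hK
      _ ≤ 1 / (1 - κ₁ * κ₂) := div_le_div_of_nonneg_right h_one h_nonneg
  · calc ‖1 - K‖ = ‖X * K‖ := by rw [norm_sub_rev, sub_eq_of_eq_add' hK]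
      _ ≤ ‖X‖ / (1 - κ₁ * κ₂) := norm_le_div_one_sub_of_eq_add_mul hX hκ hXK
      _ ≤ κ₁ * κ₂ / (1 - κ₁ * κ₂) := div_le_div_of_nonneg_right hX h_nonneg

theorem euclideanOpNorm_one_le (n : ℕ) :
    euclideanOpNorm (1 : Matrix (Fin n) (Fin n) ℝ) ≤ 1 := by
  rw [euclideanOpNorm, map_one]
  exact ContinuousLinearMap.norm_id_le

/-- Norm bounds on the hybrid gain `K₁ = −Φ₂(Φ₁ − Φ₂)⁻¹`. -/
theorem stmt14 (n : ℕ) (Φ₁ Φ₂ : Matrix (Fin n) (Fin n) ℝ)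
    (h₁ : IsUnit Φ₁) (h₂ : IsUnit Φ₂)
    (κ₁ κ₂ : ℝ) (hκ₁ : 0 ≤ κ₁) (hκ₂ : 0 ≤ κ₂)
    (hn₁ : euclideanOpNorm Φ₁ ≤ κ₁) (hn₂ : euclideanOpNorm Φ₂⁻¹ ≤ κ₂)
    (hκ : κ₁ * κ₂ < 1) :
    IsUnit (Φ₁ - Φ₂) ∧
      euclideanOpNorm (-(Φ₂ * (Φ₁ - Φ₂)⁻¹)) ≤ 1 / (1 - κ₁ * κ₂) ∧
      euclideanOpNorm (1 - -(Φ₂ * (Φ₁ - Φ₂)⁻¹)) ≤ κ₁ * κ₂ / (1 - κ₁ * κ₂) := by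
  rw [Matrix.nonsing_inv_eq_ringInverse] at hn₂ ⊢
  -- `euclideanOpNorm` unfolds to the matrix norm of this scope.
  open scoped Matrix.Norms.L2Operator in
  exact stmt14_general (euclideanOpNorm_one_le n) h₂ hn₁ hn₂ hκ
end

section
/- Let n ≥ 1, let δ > 0, let γ₁, γ₂ > 0, let θ* ∈ ℝⁿ, let φ : ℝ → ℝⁿ be continuous with |φ(s)| ≤ φ_M for all s ∈ [0,δ], where φ_M ≥ 0, and let w : ℝ → ℝ be continuous. Define the noisy output y(t) = ⟨φ(t), θ*⟩ + w(t). For i = 1,2, let θᵢ : [0,δ] → ℝⁿ solve θᵢ'(t) = −γᵢ(⟨φ(t), θᵢ(t)⟩ − y(t))φ(t) with θ₁(0) = θ₂(0), and let Φᵢ solve Φᵢ'(t) = −γᵢ φ(t)φ(t)ᵀ Φᵢ(t), Φᵢ(0) = I. Assume Φ₁(δ) − Φ₂(δ) is invertible and set K₁ = −Φ₂(δ)(Φ₁(δ) − Φ₂(δ))⁻¹ and K₂ = I − K₁. Then |K₁θ₁(δ) + K₂θ₂(δ) − θ*| ≤ (‖K₁‖γ₁ + ‖I − K₁‖γ₂)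 φ_M ∫_{0}^{δ} |w(s)| ds, where ‖·‖ is the operator norm induced by the Euclidean norm. -/
open scoped RealInnerProductSpace

/-!
Subtracting from an estimate `θ` both the constant solution `θ*` and the noiseless error
`Φ(t) (θ(a) - θ*)` leaves the forced response `z`, which starts at `0` and obeys the same equation
driven by the noise `w` alone. There `⟪z, z'⟫ = -γ ⟪φ, z⟫² + γ w ⟪φ, z⟫`, and the first term
is nonpositive, so `‖z‖` grows at rate at most `γ φ_M |w|`. The gains satisfy `K₁ + K₂ = 1`
and `K₁ Φ₁ + K₂ Φ₂ = 0`: combining the two estimates keeps `θ*` and cancels the common initial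
error, so only the two forced responses remain.
-/

open Set MeasureTheory

section NormGrowth

lemma le_sqrt_sq_add_sq (x y : ℝ) : x ≤ √(x ^ 2 + y ^ 2) :=
  Real.le_sqrt_of_sq_le (le_add_of_nonneg_right (sq_nonneg y))

variable {E : Type*} [NormedAddCommGroup E] [InnerProductSpace ℝ E]

-- The norm itself need not be differentiable at `0`, hence the regularization by `ε`.
lemma sqrt_norm_sq_add_sq_le_add_integral {f f' : ℝ → E} {g : ℝ → ℝ} {a b ε : ℝ} (hab : a ≤ b)
    (hε : ε ≠ 0) (hf : ContinuousOn f (Icc a b))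
    (hf' : ∀ t ∈ Ioo a b, HasDerivWithinAt f (f' t) (Ioi t) t)
    (hg : IntervalIntegrable g volume a b) (hg₀ : ∀ t ∈ Ioo a b, 0 ≤ g t)
    (hfg : ∀ t ∈ Ioo a b, ⟪f t, f' t⟫ ≤ g t * ‖f t‖) :
    √(‖f b‖ ^ 2 + ε ^ 2) ≤ √(‖f a‖ ^ 2 + ε ^ 2) + ∫ t in a..b, g t := by
  have hpos (t : ℝ) : 0 < ‖f t‖ ^ 2 + ε ^ 2 := by positivity
  rw [← sub_le_iff_le_add']
  refine intervalIntegral.sub_le_integral_of_hasDeriv_right_of_le hab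
    (g := fun t => √(‖f t‖ ^ 2 + ε ^ 2)) (by fun_prop)
    (fun t ht => ((hf' t ht).norm_sq.add_const (ε ^ 2)).sqrt (hpos t).ne')
    ((intervalIntegrable_iff_integrableOn_Icc_of_le hab).1 hg) fun t ht => ?_
  rw [mul_div_mul_left _ _ two_ne_zero, div_le_iff₀ (Real.sqrt_pos.2 (hpos t))]
  exact (hfg t ht).trans
    (mul_le_mul_of_nonneg_left (le_sqrt_sq_add_sq ‖f t‖ ε) (hg₀ t ht))

theorem norm_le_norm_add_integral_of_inner_deriv_le {f f' : ℝ → E} {g : ℝ → ℝ} {a b : ℝ}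
    (hab : a ≤ b) (hf : ContinuousOn f (Icc a b))
    (hf' : ∀ t ∈ Ioo a b, HasDerivWithinAt f (f' t) (Ioi t) t)
    (hg : IntervalIntegrable g volume a b) (hg₀ : ∀ t ∈ Ioo a b, 0 ≤ g t)
    (hfg : ∀ t ∈ Ioo a b, ⟪f t, f' t⟫ ≤ g t * ‖f t‖) :
    ‖f b‖ ≤ ‖f a‖ + ∫ t in a..b, g t := by
  refine le_of_forall_pos_le_add fun ε hε => ?_
  have hsqrt : √(‖f a‖ ^ 2 + ε ^ 2) ≤ ‖f a‖ + ε :=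
    Real.sqrt_le_iff.2 ⟨by positivity, by nlinarith [mul_nonneg (norm_nonneg (f a)) hε.le]⟩
  calc ‖f b‖ ≤ √(‖f b‖ ^ 2 + ε ^ 2) := le_sqrt_sq_add_sq ‖f b‖ ε
    _ ≤ √(‖f a‖ ^ 2 + ε ^ 2) + ∫ t in a..b, g t :=
      sqrt_norm_sq_add_sq_le_add_integral hab hε.ne' hf hf' hg hg₀ hfg
    _ ≤ ‖f a‖ + (∫ t in a..b, g t) + ε := by linarith

end NormGrowth

section GradientEstimator

variable {E : Type*} [NormedAddCommGroup E] [InnerProductSpace ℝ E]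

/-- `θ` is a trajectory on `s` of the gradient estimator with rate `γ`, regressor `φ` and measured
output `y`. Derivatives are taken within `s`, hence one-sided at the endpoints of an interval. -/
def IsGradientEstimate (γ : ℝ) (φ : ℝ → E) (y : ℝ → ℝ) (θ : ℝ → E) (s : Set ℝ) : Prop :=
  ∀ t ∈ s, HasDerivWithinAt θ (-(γ * (⟪φ t, θ t⟫ - y t)) • φ t) s t

/-- `Φ` is the state transition operator on `s`, with initial time `a`, of the error dynamics
`x' = -γ φ φᵀ x`; the matrix `φ φᵀ` is encoded as the rank-one operator `x ↦ ⟪φ, x⟫ φ`. -/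
structure IsTransitionOperator (γ : ℝ) (φ : ℝ → E) (Φ : ℝ → E →L[ℝ] E) (a : ℝ) (s : Set ℝ) :
    Prop where
  initial : Φ a = 1
  hasDerivWithinAt : ∀ t ∈ s,
    HasDerivWithinAt Φ (-γ • (InnerProductSpace.rankOne ℝ (φ t) (φ t) * Φ t)) s t

variable {γ a b M : ℝ} {φ θ θ₁ θ₂ : ℝ → E} {w y₁ y₂ : ℝ → ℝ} {s : Set ℝ}

lemma isGradientEstimate_const (γ : ℝ) (φ : ℝ → E) (x : E) (s : Set ℝ) :
    IsGradientEstimate γ φ (fun t => ⟪φ t, x⟫) (fun _ => x) s := fun t _ => by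
  simpa only [sub_self, mul_zero, neg_zero, zero_smul] using hasDerivWithinAt_const t s x

lemma IsTransitionOperator.isGradientEstimate {Φ : ℝ → E →L[ℝ] E}
    (hΦ : IsTransitionOperator γ φ Φ a s) (x : E) :
    IsGradientEstimate γ φ (fun _ => 0) (fun t => Φ t x) s := fun t ht => by
  refine ((hΦ.hasDerivWithinAt t ht).clm_apply (hasDerivWithinAt_const t s x)).congr_deriv ?_
  simp [smul_smul]

lemma IsGradientEstimate.sub (h₁ : IsGradientEstimate γ φ y₁ θ₁ s)
    (h₂ : IsGradientEstimate γ φ y₂ θ₂ s) :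
    IsGradientEstimate γ φ (fun t => y₁ t - y₂ t) (fun t => θ₁ t - θ₂ t) s := fun t ht => by
  refine ((h₁ t ht).sub (h₂ t ht)).congr_deriv ?_
  rw [← sub_smul, inner_sub_right]
  congr 1
  ring

lemma inner_gradient_le (hγ : 0 ≤ γ) {p : E} (hp : ‖p‖ ≤ M) (z : E) (v : ℝ) :
    ⟪z, -(γ * (⟪p, z⟫ - v)) • p⟫ ≤ γ * M * |v| * ‖z‖ := by
  have hinner : |⟪p, z⟫| ≤ M * ‖z‖ :=
    (abs_real_inner_le_norm p z).trans (mul_le_mul_of_nonneg_right hp (norm_nonneg z))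
  calc ⟪z, -(γ * (⟪p, z⟫ - v)) • p⟫ = γ * (v * ⟪p, z⟫) - γ * ⟪p, z⟫ ^ 2 := by
        rw [real_inner_smul_right, real_inner_comm p z]; ring
    _ ≤ γ * (v * ⟪p, z⟫) := sub_le_self _ (by positivity)
    _ ≤ γ * (|v| * |⟪p, z⟫|) := by
        rw [← abs_mul]
        exact mul_le_mul_of_nonneg_left (le_abs_self _) hγ
    _ ≤ γ * (|v| * (M * ‖z‖)) := by gcongr
    _ = γ * M * |v| * ‖z‖ := by ring

theorem IsGradientEstimate.norm_le_norm_add (hγ : 0 ≤ γ) (hab : a ≤ b)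
    (hφ : ∀ t ∈ Icc a b, ‖φ t‖ ≤ M) (hw : IntervalIntegrable w volume a b)
    (hθ : IsGradientEstimate γ φ w θ (Icc a b)) :
    ‖θ b‖ ≤ ‖θ a‖ + γ * M * ∫ t in a..b, |w t| := by
  have hM : 0 ≤ M := (norm_nonneg _).trans (hφ a (left_mem_Icc.2 hab))
  rw [← intervalIntegral.integral_const_mul]
  exact norm_le_norm_add_integral_of_inner_deriv_le hab
    (fun t ht => (hθ t ht).continuousWithinAt)
    (fun t ht => (hθ t (Ioo_subset_Icc_self ht)).mono_of_mem_nhdsWithin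
      (Icc_mem_nhdsGT_of_mem (Ioo_subset_Ico_self ht)))
    (hw.abs.const_mul _) (fun t _ => by positivity)
    (fun t ht => inner_gradient_le hγ (hφ t (Ioo_subset_Icc_self ht)) (θ t) (w t))

theorem IsGradientEstimate.norm_sub_transition_le {Φ : ℝ → E →L[ℝ] E} {x : E} (hγ : 0 ≤ γ)
    (hab : a ≤ b) (hφ : ∀ t ∈ Icc a b, ‖φ t‖ ≤ M) (hw : IntervalIntegrable w volume a b)
    (hθ : IsGradientEstimate γ φ (fun t => ⟪φ t, x⟫ + w t) θ (Icc a b))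
    (hΦ : IsTransitionOperator γ φ Φ a (Icc a b)) :
    ‖θ b - x - Φ b (θ a - x)‖ ≤ γ * M * ∫ t in a..b, |w t| := by
  have hz : IsGradientEstimate γ φ w (fun t => θ t - x - Φ t (θ a - x)) (Icc a b) := by
    simpa only [add_sub_cancel_left, sub_zero] using
      (hθ.sub (isGradientEstimate_const γ φ x _)).sub (hΦ.isGradientEstimate (θ a - x))
  simpa [hΦ.initial] using hz.norm_le_norm_add hγ hab hφ hw

end GradientEstimator

section Reset

/-- The gain `K = -Q (P - Q)⁻¹` of the hybrid reset, the weight given to the estimate with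
transition `P` when the other one has transition `Q`. It is `0` by convention when `P - Q` is not
invertible. -/
noncomputable def resetGain {R : Type*} [Ring R] (P Q : R) : R := -(Q * Ring.inverse (P - Q))

lemma resetGain_mul_add_one_sub_mul {R : Type*} [Ring R] {P Q : R} (h : IsUnit (P - Q)) :
    resetGain P Q * P + (1 - resetGain P Q) * Q = 0 := by
  have hgain : resetGain P Q * (P - Q) = -Q := by
    rw [resetGain, neg_mul, Ring.inverse_mul_cancel_right _ _ h]
  calc resetGain P Q * P + (1 - resetGain P Q) * Q = resetGain P Q * (P - Q) + Q := by noncomm_ring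
    _ = 0 := by rw [hgain, neg_add_cancel]

lemma smul_add_smul_sub_eq {R E : Type*} [Ring R] [AddCommGroup E] [Module R E]
    {K₁ K₂ P₁ P₂ : R} (hK : K₁ + K₂ = 1) (hKP : K₁ * P₁ + K₂ * P₂ = 0) (u₁ u₂ x e : E) :
    K₁ • u₁ + K₂ • u₂ - x = K₁ • (u₁ - x - P₁ • e) + K₂ • (u₂ - x - P₂ • e) := by
  have hx : K₁ • x + K₂ • x = x := by rw [← add_smul, hK, one_smul]
  have he : K₁ • P₁ • e + K₂ • P₂ • e = 0 := by
    rw [smul_smul, smul_smul, ← add_smul, hKP, zero_smul]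
  calc K₁ • u₁ + K₂ • u₂ - x
      = K₁ • u₁ + K₂ • u₂ - (K₁ • x + K₂ • x) - (K₁ • P₁ • e + K₂ • P₂ • e) := by
        rw [hx, he, sub_zero]
    _ = K₁ • (u₁ - x - P₁ • e) + K₂ • (u₂ - x - P₂ • e) := by
        simp only [smul_sub]; abel

end Reset

section Matrix

variable {ι : Type*} [Fintype ι] [DecidableEq ι]

lemma toEuclideanCLM_vecMulVec {𝕜 : Type*} [RCLike 𝕜] (x y : EuclideanSpace 𝕜 ι) :
    Matrix.toEuclideanCLM (𝕜 := 𝕜) (Matrix.vecMulVec x (star y)) =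
      InnerProductSpace.rankOne 𝕜 x y := by
  ext z i
  simp [Matrix.vecMulVec_mulVec, EuclideanSpace.inner_eq_star_dotProduct, dotProduct_comm,
    mul_comm]

lemma hasDerivWithinAt_toEuclideanCLM {𝕜 : Type*} [RCLike 𝕜] {A : 𝕜 → Matrix ι ι 𝕜}
    {A' : Matrix ι ι 𝕜} {s : Set 𝕜} {t : 𝕜}
    (h : ∀ i j, HasDerivWithinAt (fun u => A u i j) (A' i j) s t) :
    HasDerivWithinAt (fun u => Matrix.toEuclideanCLM (𝕜 := 𝕜) (A u))
      (Matrix.toEuclideanCLM (𝕜 := 𝕜) A') s t := by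
  have hsum (B : Matrix ι ι 𝕜) : Matrix.toEuclideanCLM (𝕜 := 𝕜) B =
      ∑ i, ∑ j, B i j • Matrix.toEuclideanCLM (𝕜 := 𝕜) (Matrix.single i j 1) := by
    conv_lhs => rw [Matrix.matrix_eq_sum_single B]
    simp only [map_sum, ← map_smul, Matrix.smul_single, smul_eq_mul, mul_one]
  rw [funext fun u => hsum (A u), hsum A']
  exact HasDerivWithinAt.fun_sum fun i _ => HasDerivWithinAt.fun_sum fun j _ =>
    (h i j).smul_const (Matrix.toEuclideanCLM (𝕜 := 𝕜) (Matrix.single i j 1))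

lemma isTransitionOperator_toEuclideanCLM {γ a : ℝ} {φ : ℝ → EuclideanSpace ℝ ι}
    {Φ : ℝ → Matrix ι ι ℝ} {s : Set ℝ} (hΦa : Φ a = 1)
    (hΦ : ∀ t ∈ s, ∀ i j, HasDerivWithinAt (fun u => Φ u i j)
      ((-γ • (Matrix.vecMulVec (φ t) (φ t) * Φ t)) i j) s t) :
    IsTransitionOperator γ φ (fun t => Matrix.toEuclideanCLM (𝕜 := ℝ) (Φ t)) a s where
  initial := by rw [hΦa, map_one]
  hasDerivWithinAt t ht := by
    have h := hasDerivWithinAt_toEuclideanCLM (hΦ t ht)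
    rwa [map_smul, map_mul, ← star_trivial (φ t).ofLp, toEuclideanCLM_vecMulVec] at h

end Matrix

theorem stmt15_general {E : Type*} [NormedAddCommGroup E] [InnerProductSpace ℝ E]
    {a b γ₁ γ₂ M : ℝ} {x : E} {φ θ₁ θ₂ : ℝ → E} {w : ℝ → ℝ} {Φ₁ Φ₂ : ℝ → E →L[ℝ] E}
    {K₁ K₂ : E →L[ℝ] E} (hab : a ≤ b) (hγ₁ : 0 ≤ γ₁) (hγ₂ : 0 ≤ γ₂)
    (hφ : ∀ t ∈ Icc a b, ‖φ t‖ ≤ M) (hw : IntervalIntegrable w volume a b)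
    (hθ₁ : IsGradientEstimate γ₁ φ (fun t => ⟪φ t, x⟫ + w t) θ₁ (Icc a b))
    (hθ₂ : IsGradientEstimate γ₂ φ (fun t => ⟪φ t, x⟫ + w t) θ₂ (Icc a b))
    (hθ : θ₁ a = θ₂ a) (hΦ₁ : IsTransitionOperator γ₁ φ Φ₁ a (Icc a b))
    (hΦ₂ : IsTransitionOperator γ₂ φ Φ₂ a (Icc a b)) (hK : K₁ + K₂ = 1)
    (hKΦ : K₁ * Φ₁ b + K₂ * Φ₂ b = 0) :
    ‖K₁ (θ₁ b) + K₂ (θ₂ b) - x‖ ≤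
      (‖K₁‖ * γ₁ + ‖K₂‖ * γ₂) * M * ∫ t in a..b, |w t| := by
  have hz₁ := hθ₁.norm_sub_transition_le hγ₁ hab hφ hw hΦ₁
  have hz₂ := hθ₂.norm_sub_transition_le hγ₂ hab hφ hw hΦ₂
  rw [← hθ] at hz₂
  calc ‖K₁ (θ₁ b) + K₂ (θ₂ b) - x‖
      = ‖K₁ (θ₁ b - x - Φ₁ b (θ₁ a - x)) + K₂ (θ₂ b - x - Φ₂ b (θ₁ a - x))‖ :=
        congrArg norm (smul_add_smul_sub_eq hK hKΦ (θ₁ b) (θ₂ b) x (θ₁ a - x))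
    _ ≤ ‖K₁‖ * (γ₁ * M * ∫ t in a..b, |w t|) + ‖K₂‖ * (γ₂ * M * ∫ t in a..b, |w t|) :=
        norm_add_le_of_le (K₁.le_opNorm_of_le hz₁) (K₂.le_opNorm_of_le hz₂)
    _ = (‖K₁‖ * γ₁ + ‖K₂‖ * γ₂) * M * ∫ t in a..b, |w t| := by ring

/-- Error bound for the hybrid reset under measurement noise. -/
theorem stmt15 (n : ℕ) (hn : 1 ≤ n) (δ : ℝ) (hδ : 0 < δ)
    (γ₁ γ₂ : ℝ) (hγ₁ : 0 < γ₁) (hγ₂ : 0 < γ₂)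
    (θs : EuclideanSpace ℝ (Fin n))
    (φM : ℝ) (hφM : 0 ≤ φM)
    (φ : ℝ → EuclideanSpace ℝ (Fin n)) (hφc : Continuous φ)
    (hbound : ∀ s ∈ Set.Icc (0 : ℝ) δ, ‖φ s‖ ≤ φM)
    (w : ℝ → ℝ) (hw : Continuous w)
    (y : ℝ → ℝ) (hy : ∀ t, y t = ⟪φ t, θs⟫ + w t)
    (θ₁ θ₂ : ℝ → EuclideanSpace ℝ (Fin n))
    (hθ₁ : ∀ t ∈ Set.Icc (0 : ℝ) δ,
      HasDerivAt θ₁ (-(γ₁ * (⟪φ t, θ₁ t⟫ - y t)) • φ t) t)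
    (hθ₂ : ∀ t ∈ Set.Icc (0 : ℝ) δ,
      HasDerivAt θ₂ (-(γ₂ * (⟪φ t, θ₂ t⟫ - y t)) • φ t) t)
    (hθ0 : θ₁ 0 = θ₂ 0)
    (Φ₁ Φ₂ : ℝ → Matrix (Fin n) (Fin n) ℝ)
    (hΦ₁0 : Φ₁ 0 = 1) (hΦ₂0 : Φ₂ 0 = 1)
    (hΦ₁ : ∀ t ∈ Set.Icc (0 : ℝ) δ, ∀ i j, HasDerivAt (fun s => Φ₁ s i j)
      ((-γ₁ • (Matrix.vecMulVec (φ t) (φ t) * Φ₁ t)) i j) t)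
    (hΦ₂ : ∀ t ∈ Set.Icc (0 : ℝ) δ, ∀ i j, HasDerivAt (fun s => Φ₂ s i j)
      ((-γ₂ • (Matrix.vecMulVec (φ t) (φ t) * Φ₂ t)) i j) t)
    (hinv : IsUnit (Φ₁ δ - Φ₂ δ))
    (K₁ K₂ : Matrix (Fin n) (Fin n) ℝ)
    (hK₁ : K₁ = -(Φ₂ δ * (Φ₁ δ - Φ₂ δ)⁻¹)) (hK₂ : K₂ = 1 - K₁) :
    ‖Matrix.toEuclideanCLM (𝕜 := ℝ) K₁ (θ₁ δ) +
        Matrix.toEuclideanCLM (𝕜 := ℝ) K₂ (θ₂ δ) - θs‖ ≤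
      (euclideanOpNorm K₁ * γ₁ + euclideanOpNorm (1 - K₁) * γ₂) * φM *
        ∫ s in (0:ℝ)..δ, |w s| := by
  obtain rfl : y = fun t => ⟪φ t, θs⟫ + w t := funext hy
  have hK : K₁ = resetGain (Φ₁ δ) (Φ₂ δ) := by
    rw [hK₁, Matrix.nonsing_inv_eq_ringInverse, resetGain]
  have hKΦ : K₁ * Φ₁ δ + K₂ * Φ₂ δ = 0 := by
    rw [hK₂, hK, resetGain_mul_add_one_sub_mul hinv]
  rw [← hK₂]
  exact stmt15_general hδ.le hγ₁.le hγ₂.le hbound (hw.intervalIntegrable 0 δ)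
    (fun t ht => (hθ₁ t ht).hasDerivWithinAt) (fun t ht => (hθ₂ t ht).hasDerivWithinAt) hθ0
    (isTransitionOperator_toEuclideanCLM hΦ₁0 fun t ht i j => (hΦ₁ t ht i j).hasDerivWithinAt)
    (isTransitionOperator_toEuclideanCLM hΦ₂0 fun t ht i j => (hΦ₂ t ht i j).hasDerivWithinAt)
    (by rw [← map_add, hK₂, add_sub_cancel, map_one])
    (by rw [← map_mul, ← map_mul, ← map_add, hKΦ, map_zero])
end

section
/- Let n ≥ 1, let γ > ０, let δ > 0, and let φ : ℝ → ℝⁿ be continuous with |φ(s)| ≤ φ_M for all s ≥ 0, where φ_M ≥ 0. Assume that for every k ∈ ℕ, φ is exciting on [kδ, (k+1)δ] with level η > 0. Set α = 2ηγ/(1 + φ_M²γδ)², κ = (1 − α)^{−1/2} and λ = −log(1 − α)/(2δ). Then κ ≥ 1, λ > 0, and every solution x : [0,∞) → ℝⁿ of the gradient-flow error dynamics x'(t) = −γ⟨φ(t), x(t)⟩φ(t) satisfies |x(t)| ≤ κ e^{−λt} |x(0)| for all t ≥ 0. -/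
open scoped RealInnerProductSpace

/-!
Along a solution, `‖x‖²` has derivative `-2γ⟪φ, x⟫²`. Over a window `[a, b]` put
`D = ‖x a‖² - ‖x b‖²` and `u = M²γ(b - a)`. By Cauchy–Schwarz the solution moves at most
`‖x s - x a‖² ≤ (b - a) * (γM² / 2) * D`, so replacing `x s` by the frozen vector `x a` in
`∫ ⟪φ s, x s⟫² = D / (2γ)` enlarges the integral by a factor of at most `(1 + u)²`. Excitation in
the direction `x a` then gives `η ‖x a‖² ≤ (1 + u)² D / (2γ)`, that is,
`‖x b‖² ≤ (1 - α) ‖x a‖²`. Iterating over the windows, with `‖x‖` nonincreasing in between, yields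
the exponential decay.
-/

section

open Set

variable {E : Type*} [NormedAddCommGroup E] [InnerProductSpace ℝ E]

/-- The time-dependent vector field of the gradient-flow error dynamics `x' = -γ⟪φ, x⟫φ`; solutions
on an interval are the curves satisfying `IsIntegralCurveOn` for it. -/
def gradientField (γ : ℝ) (φ : ℝ → E) (t : ℝ) (x : E) : E :=
  -(γ * ⟪φ t, x⟫) • φ t

/-- The signal `φ` is exciting on `[a, b]` with level `η`. Integrability is part of the
notion, so that the integral never takes its junk value. -/
def IsExcitingOn (φ : ℝ → E) (a b η : ℝ) : Prop :=
  ∀ v : E, IntervalIntegrable (fun s => ⟪φ s, v⟫ ^ 2) MeasureTheory.volume a b ∧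
    η * ‖v‖ ^ 2 ≤ ∫ s in a..b, ⟪φ s, v⟫ ^ 2

theorem norm_sub_sq_le_of_norm_deriv_sq_le {F : Type*} [NormedAddCommGroup F] [NormedSpace ℝ F]
    {f f' : ℝ → F} {g g' : ℝ → ℝ} {a b : ℝ} (hab : a ≤ b)
    (hf : ∀ t ∈ Icc a b, HasDerivWithinAt f (f' t) (Icc a b) t)
    (hg : ∀ t ∈ Icc a b, HasDerivWithinAt g (g' t) (Icc a b) t)
    (hfg : ∀ t ∈ Icc a b, ‖f' t‖ ^ 2 ≤ g' t) :
    ‖f b - f a‖ ^ 2 ≤ (b - a) * (g b - g a) := by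
  -- Integrating `2c‖f'‖ ≤ c²‖f'‖² + 1` makes a quadratic polynomial in `c` nonnegative.
  have young (c : ℝ) : ‖(2 * c) • (f b - f a)‖ ≤ c ^ 2 * (g b - g a) + (b - a) := by
    have hF (t) (ht : t ∈ Icc a b) :
        HasDerivWithinAt (fun t => (2 * c) • (f t - f a)) ((2 * c) • f' t) (Icc a b) t :=
      ((hf t ht).sub_const (f a)).const_smul (2 * c)
    have hG (t) (ht : t ∈ Icc a b) :
        HasDerivWithinAt (fun t => c ^ 2 * (g t - g a) + (t - a)) (c ^ 2 * g' t + 1)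
          (Icc a b) t :=
      (((hg t ht).sub_const (g a)).const_mul (c ^ 2)).add ((hasDerivWithinAt_id t _).sub_const a)
    refine image_norm_le_of_norm_deriv_right_le_deriv_boundary'
      (fun t ht => (hF t ht).continuousWithinAt)
      (fun t ht => (hF t (Ico_subset_Icc_self ht)).mono_of_mem_nhdsWithin
        (Icc_mem_nhdsGE_of_mem ht))
      (by simp)
      (fun t ht => (hG t ht).continuousWithinAt)
      (fun t ht => (hG t (Ico_subset_Icc_self ht)).mono_of_mem_nhdsWithin
        (Icc_mem_nhdsGE_of_mem ht))
      (fun t ht => ?_) (right_mem_Icc.2 hab)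
    calc ‖(2 * c) • f' t‖ = 2 * (|c| * ‖f' t‖) := by
          rw [norm_smul, Real.norm_eq_abs, abs_mul, abs_two, mul_assoc]
      _ ≤ c ^ 2 * ‖f' t‖ ^ 2 + 1 := by
          nlinarith [sq_nonneg (|c| * ‖f' t‖ - 1), sq_abs c]
      _ ≤ c ^ 2 * g' t + 1 := by gcongr; exact hfg t (Ico_subset_Icc_self ht)
  have hdiscrim : discrim (g b - g a) (-2 * ‖f b - f a‖) (b - a) ≤ 0 := by
    refine discrim_le_zero fun c => ?_
    have h := young c
    rw [norm_smul, Real.norm_eq_abs] at h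
    nlinarith [mul_le_mul_of_nonneg_right (le_abs_self (2 * c)) (norm_nonneg (f b - f a))]
  rw [discrim] at hdiscrim
  linarith

theorem sub_sq_le_mul_add_of_sq_le_mul {p q u w : ℝ} (hu : 0 ≤ u) (hw : 0 ≤ w)
    (hq : q ^ 2 ≤ u * w) : (p - q) ^ 2 ≤ (1 + u) * (p ^ 2 + w) := by
  have hcross : -(2 * p * q) ≤ u * p ^ 2 + w := by
    refine (neg_le_abs _).trans (abs_le_of_sq_le_sq ?_ (by positivity))
    nlinarith [mul_le_mul_of_nonneg_left hq (sq_nonneg p), sq_nonneg (u * p ^ 2 - w)]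
  linarith

theorem two_mul_div_one_add_sq_mem_Ioo {c u : ℝ} (hc : 0 < c) (hcu : c ≤ u) :
    2 * c / (1 + u) ^ 2 ∈ Ioo 0 1 := by
  have hu : 0 < u := hc.trans_le hcu
  refine ⟨by positivity, ?_⟩
  rw [div_lt_one (by positivity)]
  nlinarith

theorem le_rpow_mul_of_antitoneOn_of_le_mul {V : ℝ → ℝ} {r δ t : ℝ} (hr₀ : 0 < r) (hr₁ : r ≤ 1)
    (hδ : 0 < δ) (hV₀ : 0 ≤ V 0) (hanti : AntitoneOn V (Ici 0))
    (hstep : ∀ k : ℕ, V ((k + 1) * δ) ≤ r * V (k * δ)) (ht : 0 ≤ t) :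
    V t ≤ r ^ (t / δ - 1) * V 0 := by
  set k := ⌊t / δ⌋₊
  have hkt : k * δ ≤ t := (le_div_iff₀ hδ).1 (Nat.floor_le (by positivity))
  have hgeom : V (k * δ) ≤ r ^ k * V 0 := by
    simpa using le_geom (u := fun k : ℕ => V (k * δ)) hr₀.le k fun j _ => by
      simpa using hstep j
  calc V t ≤ V (k * δ) := hanti (by simp only [mem_Ici]; positivity) ht hkt
    _ ≤ r ^ k * V 0 := hgeom
    _ ≤ r ^ (t / δ - 1) * V 0 := by
        gcongr
        rw [← Real.rpow_natCast]
        exact Real.rpow_le_rpow_of_exponent_ge hr₀ hr₁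
          (sub_le_iff_le_add.2 (Nat.lt_floor_add_one _).le)

theorem rpow_neg_half_mul_exp_sq {r δ : ℝ} (hr : 0 < r) (hδ : δ ≠ 0) (t : ℝ) :
    (r ^ (-(1 : ℝ) / 2) * Real.exp (-(-Real.log r / (2 * δ)) * t)) ^ 2 = r ^ (t / δ - 1) := by
  rw [Real.rpow_def_of_pos hr, Real.rpow_def_of_pos hr, ← Real.exp_add, ← Real.exp_nat_mul]
  congr 1
  push_cast
  field_simp
  ring

variable {φ x : ℝ → E} {γ M a b : ℝ}

theorem inner_sq_le_of_norm_le {v w : E} (hv : ‖v‖ ≤ M) : ⟪v, w⟫ ^ 2 ≤ M ^ 2 * ‖w‖ ^ 2 := by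
  rw [← mul_pow]
  refine sq_le_sq.2 ((abs_real_inner_le_norm v w).trans ?_)
  exact (mul_le_mul_of_nonneg_right hv (norm_nonneg w)).trans (le_abs_self _)

theorem IsExcitingOn.le_sq_mul_sub [Nontrivial E] {η : ℝ} (hexc : IsExcitingOn φ a b η)
    (hab : a ≤ b) (hφ : ∀ t ∈ Icc a b, ‖φ t‖ ≤ M) : η ≤ M ^ 2 * (b - a) := by
  obtain ⟨v, hv⟩ := exists_norm_eq E zero_le_one
  obtain ⟨hint, hle⟩ := hexc v
  calc η = η * ‖v‖ ^ 2 := by simp [hv]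
    _ ≤ ∫ s in a..b, ⟪φ s, v⟫ ^ 2 := hle
    _ ≤ ∫ _ in a..b, M ^ 2 :=
        intervalIntegral.integral_mono_on hab hint intervalIntegrable_const fun s hs => by
          simpa [hv] using inner_sq_le_of_norm_le (w := v) (hφ s hs)
    _ = M ^ 2 * (b - a) := by rw [intervalIntegral.integral_const, smul_eq_mul, mul_comm]

theorem hasDerivWithinAt_norm_sq_of_gradientField {s : Set ℝ} {t : ℝ}
    (hx : HasDerivWithinAt x (gradientField γ φ t (x t)) s t) :
    HasDerivWithinAt (fun t => ‖x t‖ ^ 2) (-(2 * γ * ⟪φ t, x t⟫ ^ 2)) s t := by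
  convert hx.norm_sq using 1
  rw [gradientField, inner_smul_right, real_inner_comm]
  ring

theorem antitoneOn_norm_sq_of_gradientField {s : Set ℝ} (hs : Convex ℝ s) (hγ : 0 ≤ γ)
    (hx : IsIntegralCurveOn x (gradientField γ φ) s) : AntitoneOn (fun t => ‖x t‖ ^ 2) s := by
  have hV (t) (ht : t ∈ s) := hasDerivWithinAt_norm_sq_of_gradientField (hx t ht)
  refine antitoneOn_of_hasDerivWithinAt_nonpos hs (fun t ht => (hV t ht).continuousWithinAt)
    (fun t ht => (hV t (interior_subset ht)).mono interior_subset) fun t _ => ?_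
  exact neg_nonpos.2 (by positivity)

theorem norm_sub_sq_le_of_gradientField (hab : a ≤ b) (hφ : ∀ t ∈ Icc a b, ‖φ t‖ ≤ M)
    (hx : IsIntegralCurveOn x (gradientField γ φ) (Icc a b)) :
    ‖x b - x a‖ ^ 2 ≤ (b - a) * (γ * M ^ 2 / 2 * (‖x a‖ ^ 2 - ‖x b‖ ^ 2)) := by
  refine (norm_sub_sq_le_of_norm_deriv_sq_le (g := fun t => -(γ * M ^ 2 / 2) * ‖x t‖ ^ 2) hab hx
    (fun t ht => (hasDerivWithinAt_norm_sq_of_gradientField (hx t ht)).const_mul _)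
    fun t ht => ?_).trans_eq (by ring)
  calc ‖gradientField γ φ t (x t)‖ ^ 2 = (γ * ⟪φ t, x t⟫) ^ 2 * ‖φ t‖ ^ 2 := by
        rw [gradientField, norm_smul, mul_pow, norm_neg, Real.norm_eq_abs, sq_abs]
    _ ≤ (γ * ⟪φ t, x t⟫) ^ 2 * M ^ 2 := by gcongr; exact hφ t ht
    _ = -(γ * M ^ 2 / 2) * -(2 * γ * ⟪φ t, x t⟫ ^ 2) := by ring

theorem norm_sub_initial_sq_le_of_gradientField (hγ : 0 ≤ γ) (hφ : ∀ t ∈ Icc a b, ‖φ t‖ ≤ M)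
    (hx : IsIntegralCurveOn x (gradientField γ φ) (Icc a b)) {s : ℝ} (hs : s ∈ Icc a b) :
    ‖x s - x a‖ ^ 2 ≤ (b - a) * (γ * M ^ 2 / 2 * (‖x a‖ ^ 2 - ‖x b‖ ^ 2)) := by
  have hab : a ≤ b := hs.1.trans hs.2
  have hsub : Icc a s ⊆ Icc a b := Icc_subset_Icc_right hs.2
  have hanti := antitoneOn_norm_sq_of_gradientField (convex_Icc a b) hγ hx
  have hsa : 0 ≤ ‖x a‖ ^ 2 - ‖x s‖ ^ 2 := sub_nonneg.2 (hanti (left_mem_Icc.2 hab) hs hs.1)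
  have hbs : ‖x b‖ ^ 2 ≤ ‖x s‖ ^ 2 := hanti hs (right_mem_Icc.2 hab) hs.2
  calc ‖x s - x a‖ ^ 2 ≤ (s - a) * (γ * M ^ 2 / 2 * (‖x a‖ ^ 2 - ‖x s‖ ^ 2)) :=
        norm_sub_sq_le_of_gradientField hs.1 (fun t ht => hφ t (hsub ht)) (hx.mono hsub)
    _ ≤ (b - a) * (γ * M ^ 2 / 2 * (‖x a‖ ^ 2 - ‖x s‖ ^ 2)) := by gcongr; exact hs.2
    _ ≤ (b - a) * (γ * M ^ 2 / 2 * (‖x a‖ ^ 2 - ‖x b‖ ^ 2)) := by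
        have := sub_nonneg.2 hab
        gcongr

theorem inner_initial_sq_le_of_gradientField (hγ : 0 ≤ γ) (hφ : ∀ t ∈ Icc a b, ‖φ t‖ ≤ M)
    (hx : IsIntegralCurveOn x (gradientField γ φ) (Icc a b)) {s : ℝ} (hs : s ∈ Icc a b) :
    ⟪φ s, x a⟫ ^ 2 ≤ (1 + M ^ 2 * γ * (b - a)) *
      (⟪φ s, x s⟫ ^ 2 + M ^ 2 * (‖x a‖ ^ 2 - ‖x b‖ ^ 2) / 2) := by
  have hab : a ≤ b := hs.1.trans hs.2
  have : 0 ≤ b - a := sub_nonneg.2 hab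
  have : 0 ≤ ‖x a‖ ^ 2 - ‖x b‖ ^ 2 := sub_nonneg.2 <|
    antitoneOn_norm_sq_of_gradientField (convex_Icc a b) hγ hx (left_mem_Icc.2 hab)
      (right_mem_Icc.2 hab) hab
  have herror : ⟪φ s, x s - x a⟫ ^ 2 ≤
      M ^ 2 * γ * (b - a) * (M ^ 2 * (‖x a‖ ^ 2 - ‖x b‖ ^ 2) / 2) :=
    calc ⟪φ s, x s - x a⟫ ^ 2 ≤ M ^ 2 * ‖x s - x a‖ ^ 2 := inner_sq_le_of_norm_le (hφ s hs)
      _ ≤ M ^ 2 * ((b - a) * (γ * M ^ 2 / 2 * (‖x a‖ ^ 2 - ‖x b‖ ^ 2))) := by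
          gcongr
          exact norm_sub_initial_sq_le_of_gradientField hγ hφ hx hs
      _ = _ := by ring
  have hsplit : ⟪φ s, x a⟫ = ⟪φ s, x s⟫ - ⟪φ s, x s - x a⟫ := by rw [inner_sub_right]; ring
  rw [hsplit]
  exact sub_sq_le_mul_add_of_sq_le_mul (by positivity) (by positivity) herror

theorem integral_inner_initial_sq_le_of_gradientField (hγ : 0 ≤ γ) (hab : a ≤ b)
    (hφ : ∀ t ∈ Icc a b, ‖φ t‖ ≤ M) (hx : IsIntegralCurveOn x (gradientField γ φ) (Icc a b))
    (hint : IntervalIntegrable (fun s => ⟪φ s, x a⟫ ^ 2) MeasureTheory.volume a b) :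
    2 * γ * ∫ s in a..b, ⟪φ s, x a⟫ ^ 2 ≤
      (1 + M ^ 2 * γ * (b - a)) ^ 2 * (‖x a‖ ^ 2 - ‖x b‖ ^ 2) := by
  set u := M ^ 2 * γ * (b - a) with hu
  set w := M ^ 2 * (‖x a‖ ^ 2 - ‖x b‖ ^ 2) / 2 with hw
  have hderiv (t) (ht : t ∈ Icc a b) :
      HasDerivWithinAt (fun t => (1 + u) * (-‖x t‖ ^ 2 + 2 * γ * w * t))
        ((1 + u) * (2 * γ * ⟪φ t, x t⟫ ^ 2 + 2 * γ * w)) (Icc a b) t := by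
    simpa using ((hasDerivWithinAt_norm_sq_of_gradientField (hx t ht)).neg.add
      ((hasDerivWithinAt_id t _).const_mul (2 * γ * w))).const_mul (1 + u)
  rw [← intervalIntegral.integral_const_mul]
  refine (intervalIntegral.integral_le_sub_of_hasDeriv_right_of_le hab
    (fun t ht => (hderiv t ht).continuousWithinAt)
    (fun t ht => (hderiv t (Ioo_subset_Icc_self ht)).mono_of_mem_nhdsWithin
      (Icc_mem_nhdsGT_of_mem (Ioo_subset_Ico_self ht)))
    ((intervalIntegrable_iff_integrableOn_Icc_of_le hab).1 (hint.const_mul (2 * γ)))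
    fun t ht => ?_).trans_eq (by rw [hw, hu]; ring)
  calc 2 * γ * ⟪φ t, x a⟫ ^ 2 ≤ 2 * γ * ((1 + u) * (⟪φ t, x t⟫ ^ 2 + w)) := by
        gcongr
        exact inner_initial_sq_le_of_gradientField hγ hφ hx (Ioo_subset_Icc_self ht)
    _ = (1 + u) * (2 * γ * ⟪φ t, x t⟫ ^ 2 + 2 * γ * w) := by ring

theorem IsExcitingOn.norm_sq_le_of_gradientField {η : ℝ} (hexc : IsExcitingOn φ a b η) (hγ : 0 ≤ γ)
    (hab : a ≤ b) (hφ : ∀ t ∈ Icc a b, ‖φ t‖ ≤ M)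
    (hx : IsIntegralCurveOn x (gradientField γ φ) (Icc a b)) :
    ‖x b‖ ^ 2 ≤ (1 - 2 * (η * γ) / (1 + M ^ 2 * γ * (b - a)) ^ 2) * ‖x a‖ ^ 2 := by
  obtain ⟨hint, hle⟩ := hexc (x a)
  have : 0 ≤ b - a := sub_nonneg.2 hab
  have hdrop : 2 * (η * γ) * ‖x a‖ ^ 2 / (1 + M ^ 2 * γ * (b - a)) ^ 2 ≤
      ‖x a‖ ^ 2 - ‖x b‖ ^ 2 := by
    rw [div_le_iff₀' (by positivity)]
    calc 2 * (η * γ) * ‖x a‖ ^ 2 = 2 * γ * (η * ‖x a‖ ^ 2) := by ring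
      _ ≤ 2 * γ * ∫ s in a..b, ⟪φ s, x a⟫ ^ 2 := by gcongr
      _ ≤ _ := integral_inner_initial_sq_le_of_gradientField hγ hab hφ hx hint
  rw [sub_mul, one_mul, div_mul_eq_mul_div]
  linarith

theorem norm_le_of_gradientField_of_isExcitingOn {δ η r t : ℝ} (hγ : 0 ≤ γ) (hδ : 0 < δ)
    (hφ : ∀ s, 0 ≤ s → ‖φ s‖ ≤ M)
    (hexc : ∀ k : ℕ, IsExcitingOn φ (k * δ) ((k + 1) * δ) η)
    (hr : r = 1 - 2 * (η * γ) / (1 + M ^ 2 * γ * δ) ^ 2) (hr₀ : 0 < r) (hr₁ : r ≤ 1)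
    (hx : IsIntegralCurveOn x (gradientField γ φ) (Ici 0)) (ht : 0 ≤ t) :
    ‖x t‖ ≤ r ^ (-(1 : ℝ) / 2) * Real.exp (-(-Real.log r / (2 * δ)) * t) * ‖x 0‖ := by
  have hstep (k : ℕ) : ‖x ((k + 1) * δ)‖ ^ 2 ≤ r * ‖x (k * δ)‖ ^ 2 := by
    have hsub : Icc (k * δ) ((k + 1) * δ) ⊆ Ici 0 := fun s hs =>
      (by positivity : 0 ≤ k * δ).trans hs.1
    have hlen : (k + 1) * δ - k * δ = δ := by ring
    simpa only [hlen, ← hr] using (hexc k).norm_sq_le_of_gradientField hγ (by linarith)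
      (fun s hs => hφ s (hsub hs)) (hx.mono hsub)
  refine le_of_sq_le_sq ?_ (by positivity)
  rw [mul_pow, rpow_neg_half_mul_exp_sq hr₀ hδ.ne']
  exact le_rpow_mul_of_antitoneOn_of_le_mul (V := fun t => ‖x t‖ ^ 2) hr₀ hr₁ hδ (by positivity)
    (antitoneOn_norm_sq_of_gradientField (convex_Ici 0) hγ hx) hstep ht

theorem stmt18_general [Nontrivial E] {δ η α κ lam : ℝ} (hγ : 0 < γ) (hδ : 0 < δ) (hη : 0 < η)
    (hφ : ∀ s, 0 ≤ s → ‖φ s‖ ≤ M)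
    (hexc : ∀ k : ℕ, IsExcitingOn φ (k * δ) ((k + 1) * δ) η)
    (hα : α = 2 * η * γ / (1 + M ^ 2 * γ * δ) ^ 2)
    (hκ : κ = (1 - α) ^ (-(1 : ℝ) / 2)) (hlam : lam = -Real.log (1 - α) / (2 * δ)) :
    1 ≤ κ ∧ 0 < lam ∧ ∀ x : ℝ → E, IsIntegralCurveOn x (gradientField γ φ) (Ici 0) →
      ∀ t, 0 ≤ t → ‖x t‖ ≤ κ * Real.exp (-lam * t) * ‖x 0‖ := by
  rw [mul_assoc] at hα
  have hη_le : η ≤ M ^ 2 * δ := by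
    have hexc₀ : IsExcitingOn φ 0 δ η := by simpa using hexc 0
    simpa using hexc₀.le_sq_mul_sub hδ.le fun s hs => hφ s hs.1
  obtain ⟨hα₀, hα₁⟩ : α ∈ Ioo 0 1 := by
    rw [hα]
    refine two_mul_div_one_add_sq_mem_Ioo (by positivity) ?_
    calc η * γ ≤ M ^ 2 * δ * γ := by gcongr
      _ = M ^ 2 * γ * δ := by ring
  have hr₀ : 0 < 1 - α := sub_pos.2 hα₁
  have hr₁ : 1 - α < 1 := sub_lt_self 1 hα₀
  subst hκ hlam
  refine ⟨Real.one_le_rpow_of_pos_of_le_one_of_nonpos hr₀ hr₁.le (by norm_num),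
    div_pos (neg_pos.2 (Real.log_neg hr₀ hr₁)) (by positivity), fun x hx t ht => ?_⟩
  exact norm_le_of_gradientField_of_isExcitingOn hγ.le hδ hφ hexc (by rw [hα]) hr₀ hr₁.le hx ht

end

/-- Exponential decay of the error norm under excitation on
every window `[kδ, (k+1)δ]`. -/
theorem stmt18 (n : ℕ) (hn : 1 ≤ n) (γ : ℝ) (hγ : 0 < γ) (δ : ℝ) (hδ : 0 < δ)
    (φM : ℝ) (hφM : 0 ≤ φM) (η : ℝ) (hη : 0 < η)
    (φ : ℝ → EuclideanSpace ℝ (Fin n)) (hφc : Continuous φ)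
    (hbound : ∀ s : ℝ, 0 ≤ s → ‖φ s‖ ≤ φM)
    (hexc : ∀ k : ℕ, ∀ v : EuclideanSpace ℝ (Fin n),
      η * ‖v‖ ^ 2 ≤ ∫ s in ((k : ℝ) * δ)..(((k : ℝ) + 1) * δ), ⟪φ s, v⟫ ^ 2)
    (α κ lam : ℝ) (hα : α = 2 * η * γ / (1 + φM ^ 2 * γ * δ) ^ 2)
    (hκ : κ = (1 - α) ^ (-(1 : ℝ) / 2)) (hlam : lam = -Real.log (1 - α) / (2 * δ)) :
    1 ≤ κ ∧ 0 < lam ∧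
      ∀ x : ℝ → EuclideanSpace ℝ (Fin n),
        (∀ t : ℝ, 0 ≤ t → HasDerivAt x (-(γ * ⟪φ t, x t⟫) • φ t) t) →
        ∀ t : ℝ, 0 ≤ t → ‖x t‖ ≤ κ * Real.exp (-lam * t) * ‖x 0‖ := by
  have : NeZero n := ⟨by omega⟩
  obtain ⟨hκ_ge, hlam_pos, hdecay⟩ := stmt18_general hγ hδ hη hbound
    (fun k v => ⟨Continuous.intervalIntegrable (by fun_prop) _ _, hexc k v⟩) hα hκ hlam
  exact ⟨hκ_ge, hlam_pos, fun x hx => hdecay x fun t ht => (hx t ht).hasDerivWithinAt⟩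
end
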